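/- arXiv:1712.03145 — 3 statements merged into one kernel-verified Lean document; each statement's English description precedes it below -/
import Mathlib

section
/- Let m ≥ 1 and k ≥ 2 be integers, and let G be a graph whose complement is K_k^m-free. Then G contains a collection of at most C(k,2) = k(k−1)/2 vertex-disjoint cycles covering all but at most k^2·m vertices of G. -/
def ContainsCopy {α β : Type*} (H : SimpleGraph α) (G : SimpleGraph β) : Prop :=
  ∃ f : α → β, Function.Injective f ∧ ∀ a b, H.Adj a b → G.Adj (f a) (f b)

def IsCycleSet {V : Type*} (G : SimpleGraph V) (S : Set V) : Prop :=
  (∃ v, S = {v}) ∨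
  (∃ u v, G.Adj u v ∧ S = {u, v}) ∨
  (∃ (v : V) (w : G.Walk v v), w.IsCycle ∧ S = {x | x ∈ w.support})

/-!
Write `H = Gᶜ`. Suppose no `H`-copy of `K_{k+1}^m` lives on the vertices of a path of `G`. Let `x`
be the set of its first `m` vertices and `v` the last vertex after `x` with a `G`-neighbour in `x`,
say `u`. The segment from `u` to `v` closes to a cycle, fewer than `m` vertices precede it, and
every vertex after it is `H`-adjacent to all of `x`, so the rest of the path carries no `K_k^m`. By
induction the path is covered by `k` cycles up to `(k + 1) * m` vertices.

For a general vertex set, run depth-first search until `m` vertices are finished or none is left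
unexplored. The stack is a path and no edge joins a finished vertex to an unexplored one, so if `m`
vertices are finished, the unexplored ones carry no `K_k^m`. Cover the stack as above, the
unexplored vertices by induction, and leave the finished vertices uncovered. The cycles number
`k + (k - 1) + ⋯ + 1`.
-/

open Finset

section

variable {V : Type*} {G H : SimpleGraph V} {k m c c' r r' : ℕ} {S T : Finset V}

/-- `H` contains a copy of the complete multipartite graph `K_k^m` with all vertices in `S`,
recorded by its `k` parts. -/
def ContainsEquipartite (H : SimpleGraph V) (k m : ℕ) (S : Finset V) : Prop :=
  ∃ F : Fin k → Finset V, (∀ i, F i ⊆ S) ∧ (∀ i, #(F i) = m) ∧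
    Pairwise fun i j => H.IsCompleteBetween (F i) (F j)

namespace ContainsEquipartite

theorem mono (h : ContainsEquipartite H k m S) (hST : S ⊆ T) : ContainsEquipartite H k m T := by
  obtain ⟨F, hFS, hF⟩ := h
  exact ⟨F, fun i => (hFS i).trans hST, hF⟩

theorem zero_right (H : SimpleGraph V) (k : ℕ) (S : Finset V) : ContainsEquipartite H k 0 S :=
  ⟨fun _ => ∅, by simp, by simp, fun _ _ _ => by simp [SimpleGraph.IsCompleteBetween]⟩

theorem succ {A B : Finset V} (hA : ContainsEquipartite H k m A) (hAS : A ⊆ S) (hBS : B ⊆ S)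
    (hB : #B = m) (hBA : H.IsCompleteBetween B A) : ContainsEquipartite H (k + 1) m S := by
  obtain ⟨F, hFA, hFm, hF⟩ := hA
  have hBF (i : Fin k) : H.IsCompleteBetween B (F i) := fun _ hb _ ha => hBA hb (hFA i ha)
  refine ⟨Fin.cons B F, Fin.cases hBS fun i => (hFA i).trans hAS, Fin.cases hB hFm, fun i j => ?_⟩
  cases i using Fin.cases <;> cases j using Fin.cases
  · exact fun h => absurd rfl h
  · exact fun _ => hBF _
  · exact fun _ => (hBF _).symm
  · exact fun h => hF (ne_of_apply_ne Fin.succ h)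

theorem containsCopy (h : ContainsEquipartite H k m S) :
    ContainsCopy (SimpleGraph.completeMultipartiteGraph fun _ : Fin k => Fin m) H := by
  obtain ⟨F, -, hFm, hF⟩ := h
  let e (i : Fin k) : Fin m ≃ F i := ((F i).equivFinOfCardEq (hFm i)).symm
  have adj {i j : Fin k} (hij : i ≠ j) (a b : Fin m) : H.Adj (e i a) (e j b) :=
    hF hij (e i a).2 (e j b).2
  refine ⟨fun x => e x.1 x.2, ?_, fun x y hxy => adj hxy x.2 y.2⟩
  rintro ⟨i, a⟩ ⟨j, b⟩ hab
  obtain rfl | hij := eq_or_ne i j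
  · exact congrArg _ ((e i).injective (Subtype.ext hab))
  · exact absurd hab (adj hij a b).ne

end ContainsEquipartite

theorem card_lt_of_not_containsEquipartite_one (h : ¬ ContainsEquipartite H 1 m S) : #S < m := by
  by_contra! hm
  obtain ⟨B, hBS, hB⟩ := exists_subset_card_eq hm
  exact h ⟨fun _ => B, fun _ => hBS, fun _ => hB, fun i j hij => (hij (Subsingleton.elim i j)).elim⟩

/-- Some family of at most `c` pairwise disjoint cycles of `G` inside `S` misses at most `r`
vertices of `S`. -/
def HasCycleCover (G : SimpleGraph V) (c r : ℕ) (S : Finset V) : Prop :=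
  ∃ 𝒞 : Finset (Set V), #𝒞 ≤ c ∧ (𝒞 : Set (Set V)).Pairwise Disjoint ∧
    (∀ C ∈ 𝒞, IsCycleSet G C ∧ C ⊆ S) ∧ ((S : Set V) \ ⋃₀ (𝒞 : Set (Set V))).ncard ≤ r

theorem IsCycleSet.hasCycleCover (h : IsCycleSet G S) : HasCycleCover G 1 0 S :=
  ⟨{(S : Set V)}, by simp, by simp, by simpa using h, by simp⟩

namespace HasCycleCover

theorem of_card_le (h : #S ≤ r) : HasCycleCover G 0 r S :=
  ⟨∅, by simp, by simp, by simp, by simpa [Set.ncard_coe_finset] using h⟩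

theorem mono (h : HasCycleCover G c r S) (hc : c ≤ c') (hr : r ≤ r') : HasCycleCover G c' r' S := by
  obtain ⟨𝒞, hcard, hdisj, hcyc, hrest⟩ := h
  exact ⟨𝒞, hcard.trans hc, hdisj, hcyc, hrest.trans hr⟩

theorem union [DecidableEq V] (hS : HasCycleCover G c r S) (hT : HasCycleCover G c' r' T)
    (hST : Disjoint S T) : HasCycleCover G (c + c') (r + r') (S ∪ T) := by
  classical
  obtain ⟨𝒞, hcard, hdisj, hcyc, hrest⟩ := hS
  obtain ⟨𝒟, hcard', hdisj', hcyc', hrest'⟩ := hT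
  have hST' : Disjoint (S : Set V) T := disjoint_coe.mpr hST
  have hcross : ∀ C ∈ 𝒞, ∀ D ∈ 𝒟, Disjoint C D := fun C hC D hD =>
    hST'.mono (hcyc C hC).2 (hcyc' D hD).2
  have hrest_union : ((S ∪ T : Finset V) : Set V) \ ⋃₀ ((𝒞 ∪ 𝒟 : Finset (Set V)) : Set (Set V)) ⊆
      ((S : Set V) \ ⋃₀ (𝒞 : Set (Set V))) ∪ ((T : Set V) \ ⋃₀ (𝒟 : Set (Set V))) := by
    intro x
    simp only [coe_union, Set.sUnion_union, Set.mem_sdiff, Set.mem_union]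
    tauto
  refine ⟨𝒞 ∪ 𝒟, (card_union_le _ _).trans (add_le_add hcard hcard'), ?_, ?_, ?_⟩
  · rw [coe_union, Set.pairwise_union_of_symm]
    exact ⟨hdisj, hdisj', fun C hC D hD _ => hcross C hC D hD⟩
  · rw [coe_union]
    intro C hC
    obtain hC | hC := mem_union.mp hC
    · exact (hcyc C hC).imp_right fun h => Set.subset_union_of_subset_left h _
    · exact (hcyc' C hC).imp_right fun h => Set.subset_union_of_subset_right h _
  · exact (Set.ncard_le_ncard hrest_union
      (S.finite_toSet.sdiff.union T.finite_toSet.sdiff)).trans <|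
        (Set.ncard_union_le _ _).trans (add_le_add hrest hrest')

end HasCycleCover

theorem isCycleSet_support_of_isPath {u v : V} {p : G.Walk u v} (hp : p.IsPath) (h : G.Adj v u) :
    IsCycleSet G {x | x ∈ p.support} := by
  by_cases hmem : s(v, u) ∈ p.edges
  · have hp' := hp.eq_adj_toWalk_of_mem_edges (Sym2.eq_swap ▸ hmem)
    refine .inr (.inl ⟨u, v, h.symm, ?_⟩)
    ext x
    simp [hp', SimpleGraph.Adj.toWalk]
  · refine .inr (.inr ⟨v, .cons h p, (p.cons_isCycle_iff h).mpr ⟨hp, hmem⟩, ?_⟩)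
    ext x
    simp only [Set.mem_ofPred_eq, SimpleGraph.Walk.support_cons, List.mem_cons, iff_or_self]
    rintro rfl
    exact p.end_mem_support

theorem isCycleSet_of_isChain [DecidableEq V] {l : List V} (hl : l ≠ []) (hchain : l.IsChain G.Adj)
    (hnodup : l.Nodup) (hadj : G.Adj (l.getLast hl) (l.head hl)) :
    IsCycleSet G (l.toFinset : Set V) := by
  have hsupp := SimpleGraph.Walk.support_ofSupport hl hchain
  have hpath : (SimpleGraph.Walk.ofSupport l hl hchain).IsPath := by
    rwa [SimpleGraph.Walk.isPath_def, hsupp]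
  simpa only [hsupp, List.coe_toFinset] using isCycleSet_support_of_isPath hpath hadj

theorem exists_eq_append_cons_forall_not {α : Type*} {P : α → Prop} {l : List α}
    (h : ∃ a ∈ l, P a) : ∃ s a t, l = s ++ a :: t ∧ P a ∧ ∀ b ∈ t, ¬ P b := by
  induction l with
  | nil => simp at h
  | cons a l ih =>
    by_cases hl : ∃ b ∈ l, P b
    · obtain ⟨s, b, t, rfl, hb⟩ := ih hl
      exact ⟨a :: s, b, t, rfl, hb⟩
    · have ha : P a := by simpa [hl] using h
      exact ⟨[], a, l, rfl, ha, fun b hb hPb => hl ⟨b, hb, hPb⟩⟩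

section DecidableEq

variable [DecidableEq V]

theorem exists_isCycleSet_of_isChain_append {x y : List V} (hx : x ≠ []) (hy : y ≠ [])
    (hchain : (x ++ y).IsChain G.Adj) (hnodup : (x ++ y).Nodup) :
    ∃ p c s, x ++ y = p ++ (c ++ s) ∧ p.length < x.length ∧ IsCycleSet G (c.toFinset : Set V) ∧
      s ⊆ y ∧ Gᶜ.IsCompleteBetween x.toFinset s.toFinset := by
  have hxy : ∃ b ∈ y, ∃ a ∈ x, G.Adj a b :=
    ⟨_, y.head_mem hy, _, x.getLast_mem hx, hchain.rel_getLast_head_of_append hx hy⟩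
  obtain ⟨y', v, s, rfl, ⟨u, hu, huv⟩, hs⟩ := exists_eq_append_cons_forall_not hxy
  have hsub : s ⊆ y' ++ v :: s := fun b hb => by simp [hb]
  have hcomplete : Gᶜ.IsCompleteBetween x.toFinset s.toFinset := fun a ha b hb => by
    simp only [List.coe_toFinset, Set.mem_ofPred_eq] at ha hb
    exact ⟨fun hab => List.disjoint_of_nodup_append hnodup ha (hab ▸ hsub hb),
      fun hab => hs b hb ⟨a, ha, hab⟩⟩
  obtain ⟨p, x', rfl⟩ := List.append_of_mem hu
  have hsplit : (p ++ u :: x') ++ (y' ++ v :: s) = p ++ ((u :: (x' ++ y') ++ [v]) ++ s) := by simp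
  rw [hsplit] at hchain hnodup
  exact ⟨p, _, s, hsplit, by simp, isCycleSet_of_isChain (by simp)
    hchain.right_of_append.left_of_append hnodup.of_append_right.of_append_left
    (by simpa using huv.symm), hsub, hcomplete⟩

theorem hasCycleCover_of_isChain {l : List V} (hchain : l.IsChain G.Adj) (hnodup : l.Nodup)
    (hfree : ¬ ContainsEquipartite Gᶜ (k + 1) m l.toFinset) :
    HasCycleCover G k ((k + 1) * m) l.toFinset := by
  induction k generalizing l with
  | zero =>
    exact .of_card_le (by simpa using (card_lt_of_not_containsEquipartite_one hfree).le)
  | succ k ih =>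
    obtain hlen | hlen := le_or_gt l.length m
    · refine (HasCycleCover.of_card_le (l.toFinset_card_le.trans hlen)).mono (Nat.zero_le _) ?_
      exact Nat.le_mul_of_pos_left m (by omega)
    have hm : 0 < m := Nat.pos_of_ne_zero fun hm => hfree (hm ▸ .zero_right _ _ _)
    have hxlen : (l.take m).length = m := List.length_take_of_le hlen.le
    have hxy := l.take_append_drop m
    obtain ⟨p, c, s, hsplit, hp, hc, hsy, hxs⟩ := exists_isCycleSet_of_isChain_append
      (List.ne_nil_of_length_pos (hm.trans_eq hxlen.symm)) (by simpa using hlen)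
      (hxy.symm ▸ hchain) (hxy.symm ▸ hnodup)
    have hs_free : ¬ ContainsEquipartite Gᶜ (k + 1) m s.toFinset := fun hs =>
      hfree <| hs.succ (fun b hb => by simpa using List.mem_of_mem_drop (hsy (by simpa using hb)))
        (fun a ha => by simpa using List.mem_of_mem_take (by simpa using ha))
        ((List.toFinset_card_of_nodup (hnodup.sublist (l.take_sublist m))).trans hxlen) hxs
    rw [hxy] at hsplit
    subst hsplit
    obtain ⟨-, hcs_nodup, hp_cs⟩ := List.nodup_append'.mp hnodup
    obtain ⟨-, hs_nodup, hc_s⟩ := List.nodup_append'.mp hcs_nodup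
    have hs_cover := ih hchain.right_of_append.right_of_append hs_nodup hs_free
    have hp_cover : HasCycleCover G 0 m p.toFinset :=
      .of_card_le (p.toFinset_card_le.trans (hp.trans_eq hxlen).le)
    rw [List.toFinset_append, List.toFinset_append]
    refine (hp_cover.union (hc.hasCycleCover.union hs_cover ?_) ?_).mono (by omega) (by linarith)
    · exact List.disjoint_toFinset_iff_disjoint.mpr hc_s
    · rw [← List.toFinset_append]
      exact List.disjoint_toFinset_iff_disjoint.mpr hp_cs

end DecidableEq

/-- A state of depth-first search of `G` on `S`: the vertices in `A` are unexplored, those in `B`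
are finished, and `l` is the stack, top first. That `A`, `B`, `l` partition `S` and that `l` has no
repetition is expressed by one equality of multisets. -/
structure IsDFSState (G : SimpleGraph V) (S A B : Finset V) (l : List V) : Prop where
  isChain : l.IsChain G.Adj
  partition : A.val + B.val + (l : Multiset V) = S.val
  not_adj : ∀ b ∈ B, ∀ a ∈ A, ¬ G.Adj b a

namespace IsDFSState

variable {A B : Finset V} {l : List V} {v : V}

theorem initial (G : SimpleGraph V) (S : Finset V) : IsDFSState G S S ∅ [] :=
  ⟨.nil, by simp, by simp⟩

theorem nodup_add (h : IsDFSState G S A B l) : (A.val + B.val + (l : Multiset V)).Nodup :=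
  h.partition ▸ S.nodup

theorem nodup (h : IsDFSState G S A B l) : l.Nodup :=
  Multiset.coe_nodup.mp (Multiset.nodup_add.mp h.nodup_add).2.1

theorem disjoint (h : IsDFSState G S A B l) : Disjoint A B :=
  disjoint_val.mp (Multiset.nodup_add.mp (Multiset.nodup_add.mp h.nodup_add).1).2.2

theorem mem_iff (h : IsDFSState G S A B l) (x : V) : x ∈ S ↔ x ∈ A ∨ x ∈ B ∨ x ∈ l := by
  simp [← mem_val, ← h.partition, or_assoc]

theorem notMem_of_mem_stack (h : IsDFSState G S A B l) (hv : v ∈ l) : v ∉ A ∧ v ∉ B := by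
  simpa using Multiset.disjoint_right.mp (Multiset.nodup_add.mp h.nodup_add).2.2 hv

theorem isCompleteBetween_compl (h : IsDFSState G S A B l) : Gᶜ.IsCompleteBetween B A :=
  fun b hb a ha => ⟨fun hba => disjoint_left.mp h.disjoint ha (hba ▸ hb), h.not_adj b hb a ha⟩

theorem push [DecidableEq V] (h : IsDFSState G S A B l) (hv : v ∈ A)
    (hchain : (v :: l).IsChain G.Adj) : IsDFSState G S (A.erase v) B (v :: l) where
  isChain := hchain
  partition := by
    rw [← h.partition, ← Multiset.cons_erase (mem_val.mpr hv), erase_val, ← Multiset.cons_coe,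
      Multiset.add_cons, Multiset.cons_add, Multiset.cons_add]
  not_adj b hb a ha := h.not_adj b hb a (mem_of_mem_erase ha)

theorem pop (h : IsDFSState G S A B (v :: l)) (hv : ∀ a ∈ A, ¬ G.Adj v a) :
    IsDFSState G S A (B.cons v (h.notMem_of_mem_stack List.mem_cons_self).2) l where
  isChain := h.isChain.of_cons
  partition := by
    rw [← h.partition, cons_val, ← Multiset.cons_coe, Multiset.add_cons, Multiset.add_cons,
      Multiset.cons_add]
  not_adj := by simpa using ⟨hv, h.not_adj⟩

theorem exists_forall_not_isChain_cons (h : IsDFSState G S A B l) :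
    ∃ A' l', IsDFSState G S A' B l' ∧ ∀ a ∈ A', ¬ (a :: l').IsChain G.Adj := by
  classical
  induction A using Finset.strongInduction generalizing l with
  | H A ih =>
    by_cases hstuck : ∀ a ∈ A, ¬ (a :: l).IsChain G.Adj
    · exact ⟨A, l, h, hstuck⟩
    · push Not at hstuck
      obtain ⟨a, ha, hchain⟩ := hstuck
      exact ih _ (erase_ssubset ha) (h.push ha hchain)

end IsDFSState

theorem exists_isDFSState_card (G : SimpleGraph V) (S : Finset V) (n : ℕ) :
    ∃ A B l, IsDFSState G S A B l ∧ #B ≤ n ∧ (A.Nonempty → #B = n) := by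
  induction n with
  | zero => exact ⟨S, ∅, [], .initial G S, by simp⟩
  | succ n ih =>
    obtain ⟨A₀, B, l₀, h₀, hBn, hA₀⟩ := ih
    obtain rfl | hne := A₀.eq_empty_or_nonempty
    · exact ⟨∅, B, l₀, h₀, by omega, by simp⟩
    obtain ⟨A, l, h, hstuck⟩ := h₀.exists_forall_not_isChain_cons
    obtain rfl | ⟨a, ha⟩ := A.eq_empty_or_nonempty
    · exact ⟨∅, B, l, h, by omega, by simp⟩
    cases l with
    | nil => exact absurd (.singleton a) (hstuck a ha)
    | cons v l =>
      have hv : ∀ a ∈ A, ¬ G.Adj v a := fun a ha hva =>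
        hstuck a ha (h.isChain.cons_cons hva.symm)
      have hcard := hA₀ hne
      exact ⟨A, _, l, h.pop hv, by rw [card_cons, hcard], fun _ => by rw [card_cons, hcard]⟩

theorem hasCycleCover_of_not_containsEquipartite
    (hfree : ¬ ContainsEquipartite Gᶜ (k + 1) m S) :
    HasCycleCover G ((k + 1).choose 2) ((k + 1) ^ 2 * m) S := by
  classical
  induction k generalizing S with
  | zero =>
    exact .of_card_le (by simpa using (card_lt_of_not_containsEquipartite_one hfree).le)
  | succ k ih =>
    obtain ⟨A, B, l, h, hBm, hA⟩ := exists_isDFSState_card G S m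
    have hAS : A ⊆ S := fun x hx => (h.mem_iff x).mpr (.inl hx)
    have hBS : B ⊆ S := fun x hx => (h.mem_iff x).mpr (.inr (.inl hx))
    have hlS : l.toFinset ⊆ S := fun x hx => (h.mem_iff x).mpr (.inr (.inr (by simpa using hx)))
    have hS : S = A ∪ B ∪ l.toFinset := by
      ext x
      simp [h.mem_iff]
    have hA_cover : HasCycleCover G ((k + 1).choose 2) ((k + 1) ^ 2 * m) A := by
      obtain rfl | hne := A.eq_empty_or_nonempty
      · exact (HasCycleCover.of_card_le card_empty.le).mono (Nat.zero_le _) (Nat.zero_le _)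
      · exact ih fun hA_eq => hfree (hA_eq.succ hAS hBS (hA hne) h.isCompleteBetween_compl)
    have hB_cover : HasCycleCover G 0 m B := .of_card_le hBm
    have hl_cover : HasCycleCover G (k + 1) ((k + 1 + 1) * m) l.toFinset :=
      hasCycleCover_of_isChain h.isChain h.nodup fun hl => hfree (hl.mono hlS)
    have hl_disj : Disjoint (A ∪ B) l.toFinset := disjoint_right.mpr fun x hx => by
      simpa using h.notMem_of_mem_stack (List.mem_toFinset.mp hx)
    rw [hS]
    refine ((hA_cover.union hB_cover h.disjoint).union hl_cover hl_disj).mono ?_ ?_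
    · have hchoose : (k + 1 + 1).choose 2 = k + 1 + (k + 1).choose 2 := by
        rw [Nat.choose_succ_succ', Nat.choose_one_right]
      omega
    · nlinarith [Nat.zero_le (k * m)]

end

/-- Let `m ≥ 1`, `k ≥ 2` be integers and let `G` be a graph whose complement is
`K_k^m`-free. Then `G` contains at most `k(k-1)/2` vertex-disjoint cycles covering all but at
most `k^2·m` vertices of `G`. -/
theorem stmt7 {V : Type*} [Fintype V] (m k : ℕ) (hm : 1 ≤ m) (hk : 2 ≤ k)
    (G : SimpleGraph V)
    (hfree : ¬ ContainsCopy (SimpleGraph.completeMultipartiteGraph fun _ : Fin k => Fin m) Gᶜ) :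
    ∃ 𝒞 : Finset (Set V),
      𝒞.card ≤ k * (k - 1) / 2 ∧
      (𝒞 : Set (Set V)).Pairwise Disjoint ∧
      (∀ S ∈ 𝒞, IsCycleSet G S) ∧
      (Set.univ \ ⋃₀ (𝒞 : Set (Set V))).ncard ≤ k ^ 2 * m := by
  obtain ⟨t, rfl⟩ : ∃ t, k = t + 1 := ⟨k - 1, by omega⟩
  obtain ⟨𝒞, hcard, hdisj, hcyc, hrest⟩ :=
    hasCycleCover_of_not_containsEquipartite (S := univ) fun h => hfree h.containsCopy
  exact ⟨𝒞, hcard.trans_eq (Nat.choose_two_right _), hdisj, fun C hC => (hcyc C hC).1,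
    by simpa using hrest⟩
end

section
/- For every p = p(n) ∈ (0,1), the random graph G ~ G(n,p) satisfies the following property with high probability: for every family L of ℓ pairwise disjoint pairs of vertices, and for every set Y of 3ℓ vertices that is disjoint from each pair in L, the sum over all pairs {v,w} ∈ L of |N(v,Y) ∩ N(w,Y)| is at most 72·ℓ·log n if ℓ ≤ 6·(log n)/p^2, and at most 2·ℓ·|Y|·p^2 otherwise. -/
open MeasureTheory Filter

noncomputable def bernoulliM (q : ℝ) : Measure Bool :=
  ENNReal.ofReal q • Measure.dirac true + ENNReal.ofReal (1 - q) • Measure.dirac false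

noncomputable def gnp (n : ℕ) (q : ℝ) : Measure (Sym2 (Fin n) → Bool) :=
  Measure.pi fun _ => bernoulliM q

def graphOf {n : ℕ} (ω : Sym2 (Fin n) → Bool) : SimpleGraph (Fin n) :=
  SimpleGraph.fromRel (fun u v => ω s(u, v))

/-- The common neighbourhood of `v` and `w` inside `Y`. -/
def commonNbhdIn {n : ℕ} (G : SimpleGraph (Fin n)) (v w : Fin n) (Y : Finset (Fin n)) :
    Set (Fin n) :=
  {y | y ∈ Y ∧ G.Adj v y ∧ G.Adj w y}

/-!
Fix `L` and `Y`. The sum of the codegrees counts the cherries `v - y - w` with `(v, w) ∈ L` and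
`y ∈ Y` that are present in `G`. These cherries are pairwise edge-disjoint, so the sum is binomial
with `3ℓ²` trials of success probability `p²`, and a Chernoff bound with base `2` gives
`P(sum ≥ a) ≤ exp (3ℓ²p² - a log 2)`. In both regimes of `ℓ` the claimed threshold `a` makes this
at most `n ^ (-13ℓ/2)`, which beats the at most `n ^ (5ℓ)` choices of `(L, Y)`; the union bound over
all `1 ≤ ℓ ≤ n` leaves a failure probability of at most `n ^ (-1/2)`.
-/

open ProbabilityTheory
open scoped Function

section Probability

variable {Ω I E : Type*} [MeasurableSpace Ω] {μ : Measure Ω}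

lemma mgf_indicator_one [IsProbabilityMeasure μ] {A : Set Ω} (hA : MeasurableSet A) (t : ℝ) :
    mgf (A.indicator fun _ ↦ (1 : ℝ)) μ t = 1 + (Real.exp t - 1) * μ.real A := by
  have exp_indicator : (fun ω ↦ Real.exp (t * A.indicator (fun _ ↦ (1 : ℝ)) ω)) =
      fun ω ↦ 1 + A.indicator (fun _ ↦ Real.exp t - 1) ω := by
    ext ω
    by_cases hω : ω ∈ A <;> simp [hω]
  rw [mgf, exp_indicator, integral_add (integrable_const 1) ((integrable_const _).indicator hA),
    integral_indicator_const _ hA]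
  simp [mul_comm]

lemma measureReal_le_sum_indicator_le_exp {A : I → Set Ω} (hind : iIndepSet A μ)
    (hA : ∀ i, MeasurableSet (A i)) (J : Finset I) {t : ℝ} (ht : 0 ≤ t) (a : ℝ) :
    μ.real {ω | a ≤ ∑ i ∈ J, (A i).indicator (fun _ ↦ (1 : ℝ)) ω} ≤
      Real.exp ((Real.exp t - 1) * ∑ i ∈ J, μ.real (A i) - t * a) := by
  have hfun : iIndepFun (fun i ↦ (A i).indicator fun _ ↦ (1 : ℝ)) μ := hind.iIndepFun_indicator
  have : IsProbabilityMeasure μ := hfun.isProbabilityMeasure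
  have hmeas (i : I) : Measurable ((A i).indicator fun _ ↦ (1 : ℝ)) :=
    measurable_const.indicator (hA i)
  have hint : Integrable
      (fun ω ↦ Real.exp (t * (∑ i ∈ J, (A i).indicator fun _ ↦ (1 : ℝ)) ω)) μ :=
    hfun.integrable_exp_mul_sum hmeas fun i _ ↦
      integrable_exp_mul_of_le t 1 ht (hmeas i).aemeasurable
        (ae_of_all _ fun _ ↦ Set.indicator_le_self' (by simp) _)
  have ht' : 0 ≤ Real.exp t - 1 := by linarith [Real.one_le_exp ht]
  calc μ.real {ω | a ≤ ∑ i ∈ J, (A i).indicator (fun _ ↦ (1 : ℝ)) ω}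
      ≤ Real.exp (-t * a) * mgf (∑ i ∈ J, (A i).indicator fun _ ↦ (1 : ℝ)) μ t := by
        simpa only [Finset.sum_apply] using measure_ge_le_exp_mul_mgf a ht hint
    _ = Real.exp (-t * a) * ∏ i ∈ J, (1 + (Real.exp t - 1) * μ.real (A i)) := by
        rw [hfun.mgf_sum hmeas]
        simp only [mgf_indicator_one (hA _)]
    _ ≤ Real.exp (-t * a) * Real.exp (∑ i ∈ J, (Real.exp t - 1) * μ.real (A i)) := by
        gcongr
        exact Real.prod_one_add_le_exp_sum _ fun i ↦ mul_nonneg ht' measureReal_nonneg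
    _ = Real.exp ((Real.exp t - 1) * ∑ i ∈ J, μ.real (A i) - t * a) := by
        rw [← Real.exp_add, ← Finset.mul_sum]
        ring_nf

lemma iIndepSet_infinitePi_pi {X : E → Type*} [∀ e, MeasurableSpace (X e)]
    (ν : ∀ e, Measure (X e)) [∀ e, IsProbabilityMeasure (ν e)] {s : ∀ e, Set (X e)}
    (hs : ∀ e, MeasurableSet (s e)) {T : I → Finset E} (hT : Pairwise (Disjoint on T)) :
    iIndepSet (fun i ↦ Set.pi (T i) s) (Measure.infinitePi ν) := by
  classical
  refine (iIndepSet_iff_meas_biInter fun i ↦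
    .pi (T i).countable_toSet fun e _ ↦ hs e).2 fun S ↦ ?_
  have inter_eq : ⋂ i ∈ S, Set.pi (T i) s = Set.pi (S.biUnion T) s := by
    ext ω
    simp only [Set.mem_iInter, Set.mem_pi, Finset.mem_coe, Finset.mem_biUnion]
    grind
  simp only [inter_eq, Measure.infinitePi_pi ν fun e _ ↦ hs e,
    Finset.prod_biUnion (hT.set_pairwise _)]

end Probability

section Cherries

variable {V : Type*}

/-- `L` is a family of pairwise disjoint pairs of distinct vertices, none of which meets `Y`.
Pairs are ordered, so disjointness also forbids a pair together with its reversal. -/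
structure SeparatedPairs (L : Finset (V × V)) (Y : Finset V) : Prop where
  ne : ∀ q ∈ L, q.1 ≠ q.2
  disjoint : ∀ q ∈ L, ∀ q' ∈ L, q ≠ q' → ({q.1, q.2} : Set V) ∩ ({q'.1, q'.2} : Set V) = ∅
  notMem : ∀ q ∈ L, q.1 ∉ Y ∧ q.2 ∉ Y

variable [DecidableEq V]

/-- The edge set of the path `q.1 - y - q.2`: the vertex `y` is a common neighbour of the pair `q`
when both edges are present. -/
def cherry (q : V × V) (y : V) : Finset (Sym2 V) :=
  {s(q.1, y), s(q.2, y)}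

/-- The event that both edges of `cherry q y` are present. -/
def cherryEvent (q : V × V) (y : V) : Set (Sym2 V → Bool) :=
  Set.pi (cherry q y) fun _ ↦ {true}

lemma card_cherry {q : V × V} (hq : q.1 ≠ q.2) (y : V) : (cherry q y).card = 2 :=
  Finset.card_pair fun h ↦ hq (Sym2.congr_left.1 h)

lemma mem_cherry {q : V × V} {y : V} {e : Sym2 V} :
    e ∈ cherry q y ↔ ∃ x ∈ ({q.1, q.2} : Set V), e = s(x, y) := by
  simp [cherry]

lemma SeparatedPairs.pairwise_disjoint_cherry {L : Finset (V × V)} {Y : Finset V}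
    (h : SeparatedPairs L Y) :
    Pairwise (Disjoint on fun i : ↥(L ×ˢ Y) ↦ cherry i.1.1 i.1.2) := by
  rintro ⟨⟨q, y⟩, hi⟩ ⟨⟨q', y'⟩, hj⟩ hij
  obtain ⟨hq, -⟩ := Finset.mem_product.1 hi
  obtain ⟨hq', hy'⟩ := Finset.mem_product.1 hj
  refine Finset.disjoint_left.2 fun e he he' ↦ hij ?_
  obtain ⟨x, hx, rfl⟩ := mem_cherry.1 he
  obtain ⟨x', hx', hxx'⟩ := mem_cherry.1 he'
  have hxY : x ∉ Y := by
    rcases hx with rfl | rfl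
    exacts [(h.notMem q hq).1, (h.notMem q hq).2]
  rcases Sym2.eq_iff.1 hxx' with ⟨rfl, rfl⟩ | ⟨rfl, -⟩
  · have hqq' : q = q' := by
      by_contra hne
      exact (h.disjoint q hq q' hq' hne).le ⟨hx, hx'⟩
    simp only [hqq']
  · exact absurd hy' hxY

end Cherries

section BinomialRandomGraph

variable {n : ℕ} {p : ℝ}

lemma isProbabilityMeasure_bernoulliM (hp : p ∈ Set.Icc 0 1) :
    IsProbabilityMeasure (bernoulliM p) := by
  constructor
  simp [bernoulliM, ← ENNReal.ofReal_add hp.1 (sub_nonneg.2 hp.2)]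

lemma isProbabilityMeasure_gnp (n : ℕ) (hp : p ∈ Set.Icc 0 1) : IsProbabilityMeasure (gnp n p) := by
  have := isProbabilityMeasure_bernoulliM hp
  rw [gnp]
  infer_instance

lemma gnp_eq_infinitePi (n : ℕ) (hp : p ∈ Set.Icc 0 1) :
    gnp n p = Measure.infinitePi fun _ ↦ bernoulliM p := by
  have := isProbabilityMeasure_bernoulliM hp
  rw [gnp, Measure.infinitePi_eq_pi]

lemma gnp_real_cherryEvent (hp : p ∈ Set.Icc 0 1) {q : Fin n × Fin n} (hq : q.1 ≠ q.2)
    (y : Fin n) : (gnp n p).real (cherryEvent q y) = p ^ 2 := by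
  have := isProbabilityMeasure_bernoulliM hp
  rw [gnp_eq_infinitePi n hp, measureReal_def, cherryEvent,
    Measure.infinitePi_pi _ fun _ _ ↦ MeasurableSet.of_discrete, Finset.prod_const,
    card_cherry hq]
  simp [bernoulliM, hp.1]

/-- The sum of the codegrees into `Y` of the pairs in `L`. -/
noncomputable def codegreeSum (ω : Sym2 (Fin n) → Bool) (L : Finset (Fin n × Fin n))
    (Y : Finset (Fin n)) : ℕ :=
  ∑ q ∈ L, (commonNbhdIn (graphOf ω) q.1 q.2 Y).ncard

/-- The bound claimed on the codegree sum of `ℓ` pairs into a set of `m` vertices. -/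
noncomputable def codegreeBound (n : ℕ) (p : ℝ) (ℓ m : ℕ) : ℝ :=
  if (ℓ : ℝ) ≤ 6 * Real.log n / p ^ 2 then 72 * ℓ * Real.log n else 2 * ℓ * m * p ^ 2

/-- The event that some `ℓ` separated pairs and some set `Y` of `3ℓ` vertices violate the bound. -/
def codegreeViolation (n : ℕ) (p : ℝ) (ℓ : ℕ) : Set (Sym2 (Fin n) → Bool) :=
  {ω | ∃ L Y, L.card = ℓ ∧ Y.card = 3 * ℓ ∧ SeparatedPairs L Y ∧
    codegreeBound n p ℓ (3 * ℓ) < codegreeSum ω L Y}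

lemma mem_commonNbhdIn_graphOf {q : Fin n × Fin n} {Y : Finset (Fin n)}
    (hq : q.1 ∉ Y ∧ q.2 ∉ Y) (ω : Sym2 (Fin n) → Bool) (y : Fin n) :
    y ∈ commonNbhdIn (graphOf ω) q.1 q.2 Y ↔ y ∈ Y ∧ ω ∈ cherryEvent q y := by
  refine and_congr_right fun hy ↦ ?_
  have h1 : q.1 ≠ y := fun h ↦ hq.1 (h ▸ hy)
  have h2 : q.2 ≠ y := fun h ↦ hq.2 (h ▸ hy)
  simp [graphOf, cherryEvent, cherry, h1, h2, Sym2.eq_swap (a := y)]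

lemma codegreeSum_eq_sum_indicator {L : Finset (Fin n × Fin n)} {Y : Finset (Fin n)}
    (h : ∀ q ∈ L, q.1 ∉ Y ∧ q.2 ∉ Y) (ω : Sym2 (Fin n) → Bool) :
    (codegreeSum ω L Y : ℝ) =
      ∑ i ∈ L ×ˢ Y, (cherryEvent i.1 i.2).indicator (fun _ ↦ (1 : ℝ)) ω := by
  classical
  rw [codegreeSum, Nat.cast_sum, Finset.sum_product]
  refine Finset.sum_congr rfl fun q hq ↦ ?_
  have nbhd_eq : commonNbhdIn (graphOf ω) q.1 q.2 Y = Y.filter fun y ↦ ω ∈ cherryEvent q y := by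
    ext y
    simp [mem_commonNbhdIn_graphOf (h q hq)]
  rw [nbhd_eq, Set.ncard_coe_finset]
  simp [Set.indicator_apply]

lemma SeparatedPairs.gnp_real_le_codegreeSum_le_exp (hp : p ∈ Set.Icc 0 1)
    {L : Finset (Fin n × Fin n)} {Y : Finset (Fin n)} (h : SeparatedPairs L Y) {t : ℝ}
    (ht : 0 ≤ t) (a : ℝ) :
    (gnp n p).real {ω | a ≤ codegreeSum ω L Y} ≤
      Real.exp ((Real.exp t - 1) * (L.card * Y.card * p ^ 2) - t * a) := by
  have := isProbabilityMeasure_bernoulliM hp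
  have hind : iIndepSet (fun i : ↥(L ×ˢ Y) ↦ cherryEvent i.1.1 i.1.2) (gnp n p) := by
    rw [gnp_eq_infinitePi n hp]
    exact iIndepSet_infinitePi_pi _ (fun _ ↦ .of_discrete) h.pairwise_disjoint_cherry
  have sum_prob : ∑ i ∈ L ×ˢ Y, (gnp n p).real (cherryEvent i.1 i.2) =
      L.card * Y.card * p ^ 2 := by
    rw [Finset.sum_congr rfl fun i hi ↦
      gnp_real_cherryEvent hp (h.ne i.1 (Finset.mem_product.1 hi).1) i.2]
    simp
  have sum_indicator (ω : Sym2 (Fin n) → Bool) : (codegreeSum ω L Y : ℝ) =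
      ∑ i : ↥(L ×ˢ Y), (cherryEvent i.1.1 i.1.2).indicator (fun _ ↦ (1 : ℝ)) ω :=
    (codegreeSum_eq_sum_indicator h.notMem ω).trans (Finset.sum_coe_sort _ _).symm
  simp only [sum_indicator, ← sum_prob, ← Finset.sum_coe_sort (L ×ˢ Y)]
  exact measureReal_le_sum_indicator_le_exp hind (fun _ ↦ .of_discrete) Finset.univ ht a

-- The exponents are at most `18 - 72 log 2 < -31` and, as `3 < 6 log 2`, at most
-- `6 (3 - 6 log 2) < -6.9`, in units of `ℓ log n`.
lemma sub_log_two_mul_codegreeBound_le (n : ℕ) (hp : p ≠ 0) (ℓ : ℕ) :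
    ℓ * (3 * ℓ : ℕ) * p ^ 2 - Real.log 2 * codegreeBound n p ℓ (3 * ℓ) ≤
      -(13 / 2 * ℓ * Real.log n) := by
  have hp2 : 0 < p ^ 2 := by positivity
  have hlog2 : 0.69 < Real.log 2 := by linarith [Real.log_two_gt_d9]
  have hx : 0 ≤ ℓ * Real.log n := by positivity
  rw [codegreeBound]
  push_cast
  split_ifs with hℓ
  · rw [le_div_iff₀ hp2] at hℓ
    have mean_le : ℓ * (ℓ * p ^ 2) ≤ ℓ * (6 * Real.log n) := by gcongr
    nlinarith
  · rw [not_le, div_lt_iff₀ hp2] at hℓ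
    have le_mean : ℓ * (6 * Real.log n) ≤ ℓ * (ℓ * p ^ 2) := by gcongr
    nlinarith

lemma SeparatedPairs.gnp_real_codegreeBound_lt_le_exp (hp : p ∈ Set.Ioc 0 1)
    {L : Finset (Fin n × Fin n)} {Y : Finset (Fin n)} (h : SeparatedPairs L Y) {ℓ : ℕ}
    (hL : L.card = ℓ) (hY : Y.card = 3 * ℓ) :
    (gnp n p).real {ω | codegreeBound n p ℓ (3 * ℓ) < codegreeSum ω L Y} ≤
      Real.exp (-(13 / 2 * ℓ * Real.log n)) := by
  have := isProbabilityMeasure_gnp n (Set.Ioc_subset_Icc_self hp)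
  calc (gnp n p).real {ω | codegreeBound n p ℓ (3 * ℓ) < codegreeSum ω L Y}
      ≤ (gnp n p).real {ω | codegreeBound n p ℓ (3 * ℓ) ≤ codegreeSum ω L Y} :=
        measureReal_mono (Set.ofPred_subset_ofPred.2 fun _ ↦ le_of_lt)
    _ ≤ Real.exp ((Real.exp (Real.log 2) - 1) * (L.card * Y.card * p ^ 2) -
          Real.log 2 * codegreeBound n p ℓ (3 * ℓ)) :=
        h.gnp_real_le_codegreeSum_le_exp (Set.Ioc_subset_Icc_self hp)
          (Real.log_nonneg one_le_two) _
    _ ≤ Real.exp (-(13 / 2 * ℓ * Real.log n)) := by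
        rw [Real.exp_log two_pos, show (2 : ℝ) - 1 = 1 by norm_num, one_mul, hL, hY]
        exact Real.exp_le_exp.2 (sub_log_two_mul_codegreeBound_le n hp.1.ne' ℓ)

lemma choose_mul_choose_le_exp (n ℓ : ℕ) :
    ((n * n).choose ℓ * n.choose (3 * ℓ) : ℕ) ≤ Real.exp (5 * ℓ * Real.log n) := by
  calc (((n * n).choose ℓ * n.choose (3 * ℓ) : ℕ) : ℝ) ≤ ((n * n) ^ ℓ * n ^ (3 * ℓ) : ℕ) := by
        gcongr <;> exact Nat.choose_le_pow _ _
    _ = (n : ℝ) ^ (5 * ℓ) := by push_cast; ring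
    _ ≤ Real.exp (Real.log n) ^ (5 * ℓ) := by gcongr; exact Real.le_exp_log _
    _ = Real.exp (5 * ℓ * Real.log n) := by rw [← Real.exp_nat_mul]; push_cast; rfl

lemma gnp_real_codegreeViolation_le (n : ℕ) (hp : p ∈ Set.Ioc 0 1) (ℓ : ℕ) :
    (gnp n p).real (codegreeViolation n p ℓ) ≤ Real.exp (-(3 / 2 * ℓ * Real.log n)) := by
  classical
  have := isProbabilityMeasure_gnp n (Set.Ioc_subset_Icc_self hp)
  let choices : Finset (Finset (Fin n × Fin n) × Finset (Fin n)) :=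
    (Finset.univ.powersetCard ℓ ×ˢ Finset.univ.powersetCard (3 * ℓ)).filter
      fun c ↦ SeparatedPairs c.1 c.2
  have violation_subset : codegreeViolation n p ℓ ⊆
      ⋃ c ∈ choices, {ω | codegreeBound n p ℓ (3 * ℓ) < codegreeSum ω c.1 c.2} := by
    rintro ω ⟨L, Y, hL, hY, h, hω⟩
    exact Set.mem_biUnion (x := (L, Y)) (by simp [choices, hL, hY, h]) hω
  calc (gnp n p).real (codegreeViolation n p ℓ)
      ≤ ∑ c ∈ choices, (gnp n p).real
          {ω | codegreeBound n p ℓ (3 * ℓ) < codegreeSum ω c.1 c.2} :=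
        (measureReal_mono violation_subset (measure_ne_top _ _)).trans
          (measureReal_biUnion_finset_le _ _)
    _ ≤ choices.card * Real.exp (-(13 / 2 * ℓ * Real.log n)) := by
        rw [← nsmul_eq_mul]
        refine Finset.sum_le_card_nsmul _ _ _ fun c hc ↦ ?_
        simp only [choices, Finset.mem_filter, Finset.mem_product, Finset.mem_powersetCard] at hc
        exact hc.2.gnp_real_codegreeBound_lt_le_exp hp hc.1.1.2 hc.1.2.2
    _ ≤ Real.exp (5 * ℓ * Real.log n) * Real.exp (-(13 / 2 * ℓ * Real.log n)) := by
        gcongr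
        calc (choices.card : ℝ) ≤ ((n * n).choose ℓ * n.choose (3 * ℓ) : ℕ) := by
              refine Nat.cast_le.2 ((Finset.card_filter_le _ _).trans_eq ?_)
              simp
          _ ≤ Real.exp (5 * ℓ * Real.log n) := choose_mul_choose_le_exp n ℓ
    _ = Real.exp (-(3 / 2 * ℓ * Real.log n)) := by
        rw [← Real.exp_add]
        ring_nf

lemma codegreeViolation_subset_biUnion (n : ℕ) (p : ℝ) (ℓ : ℕ) :
    codegreeViolation n p ℓ ⊆ ⋃ k ∈ Finset.Icc 1 n, codegreeViolation n p k := by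
  rintro ω ⟨L, Y, hL, hY, h, hω⟩
  have hℓn : 3 * ℓ ≤ n := by simpa [hY] using Finset.card_le_univ Y
  have hℓ : ℓ ≠ 0 := by
    rintro rfl
    simp [Finset.card_eq_zero.1 hL, codegreeSum, codegreeBound] at hω
  exact Set.mem_biUnion (Finset.mem_coe.2 (Finset.mem_Icc.2 (by omega))) ⟨L, Y, hL, hY, h, hω⟩

lemma gnp_real_iUnion_codegreeViolation_le (n : ℕ) (hp : p ∈ Set.Ioc 0 1) :
    (gnp n p).real (⋃ ℓ, codegreeViolation n p ℓ) ≤ Real.exp (-(1 / 2 * Real.log n)) := by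
  have := isProbabilityMeasure_gnp n (Set.Ioc_subset_Icc_self hp)
  calc (gnp n p).real (⋃ ℓ, codegreeViolation n p ℓ)
      ≤ ∑ ℓ ∈ Finset.Icc 1 n, (gnp n p).real (codegreeViolation n p ℓ) :=
        (measureReal_mono (Set.iUnion_subset (codegreeViolation_subset_biUnion n p))
          (measure_ne_top _ _)).trans (measureReal_biUnion_finset_le _ _)
    _ ≤ ∑ ℓ ∈ Finset.Icc 1 n, Real.exp (-(3 / 2 * Real.log n)) := by
        refine Finset.sum_le_sum fun ℓ hℓ ↦ (gnp_real_codegreeViolation_le n hp ℓ).trans ?_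
        have one_le : (1 : ℝ) ≤ ℓ := Nat.one_le_cast.2 (Finset.mem_Icc.1 hℓ).1
        gcongr
        nlinarith [Real.log_natCast_nonneg n]
    _ = n * Real.exp (-(3 / 2 * Real.log n)) := by simp
    _ ≤ Real.exp (Real.log n) * Real.exp (-(3 / 2 * Real.log n)) := by
        gcongr
        exact Real.le_exp_log _
    _ = Real.exp (-(1 / 2 * Real.log n)) := by
        rw [← Real.exp_add]
        ring_nf

end BinomialRandomGraph

lemma tendsto_measure_one_of_measureReal_compl_le {ι : Type*} {l : Filter ι} {Ω : ι → Type*}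
    [∀ i, MeasurableSpace (Ω i)] {μ : ∀ i, Measure (Ω i)} [∀ i, IsProbabilityMeasure (μ i)]
    {S : ∀ i, Set (Ω i)} (hS : ∀ i, MeasurableSet (S i)) {f : ι → ℝ}
    (hf : Tendsto f l (nhds 0)) (hle : ∀ i, (μ i).real (S i)ᶜ ≤ f i) :
    Tendsto (fun i ↦ μ i (S i)) l (nhds 1) := by
  have hcompl : Tendsto (fun i ↦ (μ i).real (S i)ᶜ) l (nhds 0) :=
    squeeze_zero (fun _ ↦ measureReal_nonneg) hle hf
  have hreal : Tendsto (fun i ↦ (μ i).real (S i)) l (nhds 1) := by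
    simpa [probReal_compl_eq_one_sub (hS _)] using hcompl.const_sub 1
  simpa using ENNReal.tendsto_ofReal hreal

lemma tendsto_exp_neg_mul_log_natCast {c : ℝ} (hc : 0 < c) :
    Tendsto (fun n : ℕ ↦ Real.exp (-(c * Real.log n))) atTop (nhds 0) :=
  Real.tendsto_exp_neg_atTop_nhds_zero.comp <|
    (Real.tendsto_log_atTop.comp tendsto_natCast_atTop_atTop).const_mul_atTop hc

/-- For every `p = p(n) ∈ (0,1)`, w.h.p. `G ~ G(n,p)` satisfies: for every
family `L` of `ℓ` pairwise disjoint pairs of vertices, and every set `Y` of `3ℓ` vertices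
disjoint from each pair in `L`, we have
`∑_{(v,w) ∈ L} |N(v,Y) ∩ N(w,Y)| ≤ 72 ℓ log n` if `ℓ ≤ 6 log n / p²`, and
`≤ 2 ℓ |Y| p²` otherwise. -/
theorem stmt9 (p : ℕ → ℝ) (hp : ∀ n, 0 < p n ∧ p n < 1) :
    Tendsto (fun n => gnp n (p n)
      {ω | ∀ (L : Finset (Fin n × Fin n)) (Y : Finset (Fin n)),
        (∀ q ∈ L, q.1 ≠ q.2) →
        (∀ q ∈ L, ∀ q' ∈ L, q ≠ q' →
          ({q.1, q.2} : Set (Fin n)) ∩ ({q'.1, q'.2} : Set (Fin n)) = ∅) →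
        Y.card = 3 * L.card →
        (∀ q ∈ L, q.1 ∉ Y ∧ q.2 ∉ Y) →
        ((((L.card : ℝ) ≤ 6 * Real.log n / p n ^ 2) →
            ((∑ q ∈ L, (commonNbhdIn (graphOf ω) q.1 q.2 Y).ncard : ℕ) : ℝ) ≤
              72 * L.card * Real.log n) ∧
         (¬ ((L.card : ℝ) ≤ 6 * Real.log n / p n ^ 2) →
            ((∑ q ∈ L, (commonNbhdIn (graphOf ω) q.1 q.2 Y).ncard : ℕ) : ℝ) ≤
              2 * L.card * Y.card * p n ^ 2))})
      atTop (nhds 1) := by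
  have hpn (n : ℕ) : p n ∈ Set.Ioc 0 1 := ⟨(hp n).1, (hp n).2.le⟩
  have (n : ℕ) : IsProbabilityMeasure (gnp n (p n)) :=
    isProbabilityMeasure_gnp n (Set.Ioc_subset_Icc_self (hpn n))
  refine tendsto_measure_one_of_measureReal_compl_le (fun _ ↦ .of_discrete)
    (tendsto_exp_neg_mul_log_natCast one_half_pos) fun n ↦
    (measureReal_mono (Set.compl_subset_comm.1 ?_)).trans
      (gnp_real_iUnion_codegreeViolation_le n (hpn n))
  intro ω hω L Y hne hdisj hcard hmem
  have hle : (codegreeSum ω L Y : ℝ) ≤ codegreeBound n (p n) L.card Y.card := by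
    by_contra! hlt
    exact hω (Set.mem_iUnion.2
      ⟨L.card, L, Y, rfl, hcard, ⟨hne, hdisj, hmem⟩, hcard ▸ hlt⟩)
  rw [codegreeBound] at hle
  exact ⟨fun hℓ ↦ by rwa [if_pos hℓ] at hle, fun hℓ ↦ by rwa [if_neg hℓ] at hle⟩
end

section
/- Let r ≥ 2 be an integer, let W ⊆ [n] be a fixed set of at most n/(100r)^4 vertices, and let G ~ G(n,p) where p = p(n) ≫ (log n / n)^{1/2}. Then with high probability the following holds: for every r-coloring of the edges of G, every associated majority-color partition W = W_1 ⊎ … ⊎ W_r, and every choice of k_i ≤ 3r − 1 vertex-disjoint cycles C_1^i, …, C_{k_i}^i in each auxiliary graph H_i, the graph G contains k_1 + … + k_r vertex-disjoint monochromatic cycles such that for each i and j there is one of these cycles having color i and containing all vertices of V(C_j^i). -/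
open MeasureTheory Filter

def IsMonoCycle {V ι : Type*} (G : SimpleGraph V) (c : Sym2 V → ι) (i : ι) (S : Set V) : Prop :=
  (∃ v, S = {v}) ∨
  (∃ u v, G.Adj u v ∧ c s(u, v) = i ∧ S = {u, v}) ∨
  (∃ (v : V) (w : G.Walk v v), w.IsCycle ∧ (∀ e ∈ w.edges, c e = i) ∧ S = {x | x ∈ w.support})

def coloredNbhd {n r : ℕ} (G : SimpleGraph (Fin n)) (c : Sym2 (Fin n) → Fin r) (i : Fin r)
    (v : Fin n) (U : Set (Fin n)) : Set (Fin n) :=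
  {u | u ∈ U ∧ G.Adj v u ∧ c s(v, u) = i}

def IsMajorityPartition {n r : ℕ} (G : SimpleGraph (Fin n)) (c : Sym2 (Fin n) → Fin r)
    (W : Finset (Fin n)) (f : Fin n → Fin r) : Prop :=
  ∀ v ∈ W, ∀ j : Fin r,
    (coloredNbhd G c j v ((W : Set (Fin n))ᶜ)).ncard ≤
      (coloredNbhd G c (f v) v ((W : Set (Fin n))ᶜ)).ncard

def auxGraph {n r : ℕ} (G : SimpleGraph (Fin n)) (c : Sym2 (Fin n) → Fin r)
    (W : Finset (Fin n)) (f : Fin n → Fin r) (i : Fin r) (thr : ℝ) : SimpleGraph (Fin n) :=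
  SimpleGraph.fromRel (fun v w => v ∈ W ∧ w ∈ W ∧ f v = i ∧ f w = i ∧
    thr ≤ ((coloredNbhd G c i v ((W : Set (Fin n))ᶜ) ∩
            coloredNbhd G c i w ((W : Set (Fin n))ᶜ)).ncard : ℝ))

/-! Every cycle of `H_i` becomes a cycle of color `i` once distinct vertices outside `W` are
inserted between its consecutive vertices, each joined to both of them in color `i`. By the
definition of `H_i` there are at least `d = n p² / (50 r)⁴` candidates for each pair of consecutive
vertices, so by Hall's theorem the only obstruction is a set of pairs whose candidates form a set
`X` smaller than the number of pairs. The pairs come from injective successor maps, so a third of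
them, say `s`, are mutually disjoint. They span at least `s d` incidences with `X`, and each
incidence uses two edges of its own. The expected number of incidences is at most
`s |W| p² ≤ s d / 16`, so the pairs and `X` form such a configuration with probability at most
`exp (-s d)`. As `d ≫ log n`, this beats the `n ^ (5 s)` choices of the `2 s` vertices of the pairs
and the at most `3 s` vertices of `X`. -/

namespace IsCycleSet

variable {V : Type*} {H : SimpleGraph V} {S : Set V}

theorem exists_fin_injective_range_eq (h : IsCycleSet H S) (hS : ¬∃ v, S = {v}) :
    ∃ (m : ℕ) (g : Fin (m + 2) → V), Function.Injective g ∧ Set.range g = S ∧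
      ∀ j, H.Adj (g j) (g (j + 1)) := by
  rcases h with hv | ⟨u, v, huv, rfl⟩ | ⟨v, w, hw, rfl⟩
  · exact absurd hv hS
  · refine ⟨0, ![u, v], ?_, by simp [Set.pair_comm], ?_⟩
    · simpa [Function.Injective, Fin.forall_fin_two, eq_comm] using huv.ne
    · simpa [Fin.forall_fin_two, H.adj_comm v u] using huv
  · obtain ⟨m, hm⟩ : ∃ m, w.length = m + 2 :=
      Nat.exists_eq_add_of_le' (by have := hw.three_le_length; omega)
    refine ⟨m, fun j => w.getVert j, fun i j hij => ?_, ?_, fun j => ?_⟩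
    · exact Fin.ext (hw.getVert_injOn' (by simp only [Set.mem_ofPred_eq]; omega)
        (by simp only [Set.mem_ofPred_eq]; omega) hij)
    · ext y
      simp only [Set.mem_range, Set.mem_ofPred_eq,
        SimpleGraph.Walk.mem_support_iff_exists_getVert]
      refine ⟨fun ⟨j, hj⟩ => ⟨j, hj, by omega⟩, fun ⟨k, hk, hkl⟩ => ?_⟩
      rcases hkl.lt_or_eq with hlt | rfl
      · exact ⟨⟨k, hm ▸ hlt⟩, hk⟩
      · exact ⟨0, by simpa using hk⟩
    · have hadj : H.Adj (w.getVert j) (w.getVert (j + 1)) := w.adj_getVert_succ (by omega)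
      have hsucc : w.getVert ((j + 1 : Fin (m + 2)) : ℕ) = w.getVert (j + 1) := by
        rw [Fin.val_add_one]
        split_ifs with hj
        · simp [hj, ← hm]
        · rfl
      simpa only [hsucc] using hadj

theorem of_range_fin {k : ℕ} [NeZero k] (hk : 3 ≤ k) {h : Fin k → V}
    (hinj : Function.Injective h) (hadj : ∀ j, H.Adj (h j) (h (j + 1))) :
    IsCycleSet H (Set.range h) := by
  obtain ⟨N, rfl⟩ := Nat.exists_eq_add_of_le' hk
  let φ : SimpleGraph.cycleGraph (N + 3) →g H :=
    { toFun := h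
      map_rel' := fun {u v} huv => by
        rcases SimpleGraph.cycleGraph_adj.1 huv with huv | huv
        · obtain rfl : u = v + 1 := sub_eq_iff_eq_add'.1 huv
          exact (hadj v).symm
        · obtain rfl : v = u + 1 := sub_eq_iff_eq_add'.1 huv
          exact hadj u }
  have hsupport (j : Fin (N + 3)) : j ∈ (SimpleGraph.cycleGraph.cycle N).support := by
    rw [SimpleGraph.Walk.mem_support_iff_exists_getVert]
    refine ⟨N + 3 - j, ?_, by rw [SimpleGraph.cycleGraph.length_cycle]; omega⟩
    rw [SimpleGraph.cycleGraph.getVert_cycle (by omega)]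
    ext
    simp [Nat.sub_sub_self j.is_lt.le, Nat.mod_eq_of_lt j.is_lt]
  refine .inr (.inr ⟨φ 0, (SimpleGraph.cycleGraph.cycle N).map φ,
    SimpleGraph.cycleGraph.isCycle_cycle.map hinj, ?_⟩)
  ext y
  simp [hsupport, φ]

end IsCycleSet

theorem finProdFinEquiv_zero_add_one {m : ℕ} (j : Fin (m + 1)) :
    (finProdFinEquiv (j, (0 : Fin 2)) + 1 : Fin ((m + 1) * 2)) = finProdFinEquiv (j, 1) := by
  ext
  have hj : 2 * (j : ℕ) + 1 < (m + 1) * 2 := by omega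
  simpa [Fin.val_add, add_comm 1] using Nat.mod_eq_of_lt hj

theorem finProdFinEquiv_one_add_one {m : ℕ} (j : Fin (m + 1)) :
    (finProdFinEquiv (j, (1 : Fin 2)) + 1 : Fin ((m + 1) * 2)) = finProdFinEquiv (j + 1, 0) := by
  ext
  have hj : 1 + 2 * (j : ℕ) + 1 = 2 * (j + 1) := by ring
  simp [Fin.val_add, hj, mul_comm (m + 1) 2, Nat.mul_mod_mul_left]

namespace IsCycleSet

variable {V : Type*} {H : SimpleGraph V}

theorem of_range_union_range {m : ℕ} {g x : Fin (m + 2) → V}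
    (hinj : Function.Injective (Sum.elim g x))
    (hgx : ∀ j, H.Adj (g j) (x j)) (hxg : ∀ j, H.Adj (x j) (g (j + 1))) :
    IsCycleSet H (Set.range g ∪ Set.range x) := by
  let e : Fin ((m + 2) * 2) ≃ Fin (m + 2) ⊕ Fin (m + 2) :=
    finProdFinEquiv.symm.trans <| (Equiv.prodComm _ _).trans <|
      (finTwoEquiv.prodCongr (Equiv.refl _)).trans <| Equiv.boolProdEquivSum _
  have hg (j : Fin (m + 2)) : Sum.elim g x (e (finProdFinEquiv (j, 0))) = g j := by
    simp [e, finTwoEquiv]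
  have hx (j : Fin (m + 2)) : Sum.elim g x (e (finProdFinEquiv (j, 1))) = x j := by
    simp [e, finTwoEquiv]
  rw [← Set.Sum.elim_range, ← e.surjective.range_comp]
  refine of_range_fin (by omega) (hinj.comp e.injective) fun l => ?_
  obtain ⟨⟨j, b⟩, rfl⟩ := finProdFinEquiv.surjective l
  obtain rfl | rfl : b = 0 ∨ b = 1 := by omega
  · simpa only [Function.comp_apply, finProdFinEquiv_zero_add_one, hg, hx] using hgx j
  · simpa only [Function.comp_apply, finProdFinEquiv_one_add_one, hg, hx] using hxg j

end IsCycleSet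

theorem injective_sigma_of_pairwise_disjoint {κ V : Type*} {ι : κ → Type*} {C : κ → Set V}
    (hC : Pairwise (Function.onFun Disjoint C)) {g : (i : κ) → ι i → V}
    (hg : ∀ i, Function.Injective (g i)) (hgC : ∀ i j, g i j ∈ C i) :
    Function.Injective fun q : Σ i, ι i => g q.1 q.2 := by
  rintro ⟨i, j⟩ ⟨k, l⟩ (h : g i j = g k l)
  obtain rfl : i = k := by
    by_contra hik
    exact Set.disjoint_left.1 (hC hik) (hgC i j) (h ▸ hgC k l)
  rw [hg i h]

theorem pairwise_disjoint_union_image_fiber {κ ι V : Type*} {C : κ → Set V}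
    (hC : Pairwise (Function.onFun Disjoint C)) {x : ι → V} (hx : Function.Injective x)
    (hxC : ∀ q i, x q ∉ C i) (π : ι → κ) :
    Pairwise (Function.onFun Disjoint fun i => C i ∪ x '' (π ⁻¹' {i})) := by
  intro i k hik
  rw [Function.onFun, Set.disjoint_left]
  rintro _ (hy | ⟨q, rfl, rfl⟩) (hy' | ⟨q', rfl, hqq'⟩)
  · exact Set.disjoint_left.1 (hC hik) hy hy'
  · exact hxC q' i (hqq' ▸ hy)
  · exact hxC q k hy'
  · exact hik (by rw [hx hqq'])

theorem exists_subset_forall_ne_card_le {ι V : Type*} {a b : ι → V}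
    (ha : Function.Injective a) (hb : Function.Injective b) (hab : ∀ j, a j ≠ b j)
    (F : Finset ι) :
    ∃ S ⊆ F, (∀ j ∈ S, ∀ k ∈ S, a j ≠ b k) ∧ F.card ≤ 3 * S.card := by
  classical
  -- If `S` is maximal, then every `k ∈ F` outside `S` has `b k ∈ a(S)` or `a k ∈ b(S)`.
  obtain ⟨S, hS, hmax⟩ := Finset.exists_max_image
    {S ∈ F.powerset | ∀ j ∈ S, ∀ k ∈ S, a j ≠ b k} Finset.card ⟨∅, by simp⟩
  simp only [Finset.mem_filter, Finset.mem_powerset] at hS hmax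
  refine ⟨S, hS.1, hS.2, ?_⟩
  have hcover : F ⊆ S ∪ ({k ∈ F | b k ∈ S.image a} ∪ {k ∈ F | a k ∈ S.image b}) := by
    intro k hk
    by_contra hcon
    simp only [Finset.mem_union, Finset.mem_filter, Finset.mem_image, hk, true_and,
      not_or, not_exists, not_and] at hcon
    obtain ⟨hkS, hbk, hak⟩ := hcon
    have hinsert : ∀ j ∈ insert k S, ∀ l ∈ insert k S, a j ≠ b l := by
      simp only [Finset.forall_mem_insert]
      exact ⟨⟨hab k, fun l hl h => hak l hl h.symm⟩, fun j hj => ⟨hbk j hj, hS.2 j hj⟩⟩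
    have := hmax (insert k S) ⟨Finset.insert_subset hk hS.1, hinsert⟩
    rw [Finset.card_insert_of_notMem hkS] at this
    omega
  have hcardb : ({k ∈ F | b k ∈ S.image a} : Finset ι).card ≤ S.card :=
    (Finset.card_le_card_of_injOn b (fun _ hk => (Finset.mem_filter.1 hk).2) hb.injOn).trans
      Finset.card_image_le
  have hcarda : ({k ∈ F | a k ∈ S.image b} : Finset ι).card ≤ S.card :=
    (Finset.card_le_card_of_injOn a (fun _ hk => (Finset.mem_filter.1 hk).2) ha.injOn).trans
      Finset.card_image_le
  calc F.card ≤ _ := Finset.card_le_card hcover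
    _ ≤ S.card + (_ + _) :=
      (Finset.card_union_le _ _).trans (Nat.add_le_add_left (Finset.card_union_le _ _) _)
    _ ≤ 3 * S.card := by omega

section LinkSparse

variable {V : Type*} {G : SimpleGraph V} {w : ℕ} {d : ℝ}

open Classical in
/-- The incidences between the pairs of vertices `(a j, b j)` and a set `X` of vertices: all
`(j, y)` such that `y ∈ X` is a common neighbor of `a j` and `b j`. -/
noncomputable def pairIncidences {ι : Type*} [Fintype ι] (G : SimpleGraph V) (a b : ι → V)
    (X : Finset V) : Finset (ι × V) :=
  {q ∈ Finset.univ ×ˢ X | G.Adj (a q.1) q.2 ∧ G.Adj (b q.1) q.2}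

theorem sum_card_le_card_pairIncidences {ι : Type*} [Fintype ι] {a b : ι → V} {X : Finset V}
    {A : ι → Finset V} (hAX : ∀ j, A j ⊆ X)
    (hA : ∀ j, ∀ y ∈ A j, G.Adj (a j) y ∧ G.Adj (b j) y) :
    ∑ j, (A j).card ≤ (pairIncidences G a b X).card := by
  rw [← Finset.card_sigma]
  refine Finset.card_le_card_of_injOn (Equiv.sigmaEquivProd ι V) ?_ (Equiv.injective _).injOn
  rintro ⟨j, y⟩ hy
  have hy : y ∈ A j := by simpa using hy
  simpa [pairIncidences] using ⟨hAX j hy, hA j y hy⟩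

/-- The obstruction to Hall's condition: disjoint pairs `(a j, b j)` whose average number of
common neighbors in a set `X` of at most `w` further vertices is at least `d`. -/
def IsDenseLinkage {ι : Type*} [Fintype ι] (G : SimpleGraph V) (w : ℕ) (d : ℝ) (a b : ι → V)
    (X : Finset V) : Prop :=
  Function.Injective (Sum.elim a b) ∧ (∀ z, Sum.elim a b z ∉ X) ∧ X.card ≤ w ∧
    Fintype.card ι * d ≤ (pairIncidences G a b X).card

/-- The pseudorandomness property of `G(n, p)` behind Hall's condition: there is no dense linkage
between `s > 0` pairs and a set of at most `3 * s` vertices. -/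
def IsLinkSparse (G : SimpleGraph V) (w : ℕ) (d : ℝ) : Prop :=
  ∀ s > 0, ∀ (a b : Fin s → V) (X : Finset V), X.card ≤ 3 * s → ¬IsDenseLinkage G w d a b X

namespace IsLinkSparse

theorem exists_injective_mem {ι : Type*} [Fintype ι] (hG : IsLinkSparse G w d) {a b : ι → V}
    (ha : Function.Injective a) (hb : Function.Injective b) (hab : ∀ j, a j ≠ b j)
    {A : ι → Finset V} (hA : ∀ j, ∀ y ∈ A j, G.Adj (a j) y ∧ G.Adj (b j) y)
    (haA : ∀ j k, a j ∉ A k) (hbA : ∀ j k, b j ∉ A k)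
    (hι : Fintype.card ι ≤ w) (hd : ∀ j, d ≤ (A j).card) :
    ∃ x : ι → V, Function.Injective x ∧ ∀ j, x j ∈ A j := by
  classical
  rw [← Finset.all_card_le_biUnion_card_iff_exists_injective]
  intro F
  by_contra! hlt
  obtain ⟨S, hSF, hS, hFS⟩ := exists_subset_forall_ne_card_le ha hb hab F
  let φ : Fin S.card → ι := fun j => S.equivFin.symm j
  have hφ : Function.Injective φ := Subtype.val_injective.comp S.equivFin.symm.injective
  have hφS (j : Fin S.card) : φ j ∈ S := (S.equivFin.symm j).2
  refine hG S.card (by omega) (a ∘ φ) (b ∘ φ) (F.biUnion A) (by omega) ⟨?_, ?_, ?_, ?_⟩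
  · exact (ha.comp hφ).sumElim (hb.comp hφ) fun j k => hS _ (hφS j) _ (hφS k)
  · simp [haA, hbA]
  · have := F.card_le_univ
    omega
  · have hincid := sum_card_le_card_pairIncidences (G := G) (a := a ∘ φ) (b := b ∘ φ)
      (A := A ∘ φ) (fun j => Finset.subset_biUnion_of_mem A (hSF (hφS j))) fun j => hA (φ j)
    calc (Fintype.card (Fin S.card) : ℝ) * d ≤ ∑ j, ((A (φ j)).card : ℝ) := by
          simpa using Finset.sum_le_sum fun j (_ : j ∈ Finset.univ) => hd (φ j)
      _ ≤ (pairIncidences G (a ∘ φ) (b ∘ φ) (F.biUnion A)).card := by exact_mod_cast hincid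

variable [Finite V] {W : Finset V} {κ : Type*} {B : κ → SimpleGraph V}

theorem exists_injective_commonNeighbors {m : κ → ℕ} (hG : IsLinkSparse G W.card d)
    (hB : ∀ i, B i ≤ G) {g : (i : κ) → Fin (m i + 2) → V}
    (hinj : Function.Injective fun q : Σ i, Fin (m i + 2) => g q.1 q.2)
    (hgW : ∀ i j, g i j ∈ W)
    (hd : ∀ i j, d ≤ (((B i).commonNeighbors (g i j) (g i (j + 1)) \ W).ncard : ℝ)) :
    ∃ x : (Σ i, Fin (m i + 2)) → V, Function.Injective x ∧
      ∀ q, x q ∈ (B q.1).commonNeighbors (g q.1 q.2) (g q.1 (q.2 + 1)) \ W := by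
  classical
  have := Fintype.ofFinite V
  let a : (Σ i, Fin (m i + 2)) → V := fun q => g q.1 q.2
  let σ : (Σ i, Fin (m i + 2)) → Σ i, Fin (m i + 2) := fun q => ⟨q.1, q.2 + 1⟩
  have hσ : Function.Injective σ := by
    rintro ⟨i, j⟩ ⟨k, l⟩ h
    obtain rfl : i = k := congrArg Sigma.fst h
    have hjl : j + 1 = l + 1 := eq_of_heq (Sigma.mk.inj h).2
    rw [add_right_cancel hjl]
  have := Fintype.ofInjective a hinj
  have hne (q) : a q ≠ a (σ q) := fun h => by simpa [σ, Sigma.ext_iff] using hinj h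
  have haW (q) : a q ∈ W := hgW q.1 q.2
  obtain ⟨x, hx, hxA⟩ := hG.exists_injective_mem hinj (hinj.comp hσ) hne
    (A := fun q => ((B q.1).commonNeighbors (a q) (a (σ q)) \ W).toFinset)
    (fun q y hy => by
      rw [Set.mem_toFinset] at hy
      exact ⟨hB _ hy.1.1, hB _ hy.1.2⟩)
    (fun q _ h => (Set.mem_toFinset.1 h).2 (haW q))
    (fun q _ h => (Set.mem_toFinset.1 h).2 (haW (σ q)))
    (Finset.card_le_card_of_injOn a (fun q _ => haW q) hinj.injOn)
    (fun q => by
      rw [← Set.ncard_eq_toFinset_card']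
      exact hd q.1 q.2)
  exact ⟨x, hx, fun q => Set.mem_toFinset.1 (hxA q)⟩

theorem exists_pairwise_disjoint_isCycleSet (hG : IsLinkSparse G W.card d)
    (hB : ∀ i, B i ≤ G) {H : κ → SimpleGraph V}
    (hd : ∀ i u v, (H i).Adj u v → d ≤ (((B i).commonNeighbors u v \ W).ncard : ℝ))
    {C : κ → Set V} (hC : ∀ i, IsCycleSet (H i) (C i)) (hCW : ∀ i, C i ⊆ W)
    (hdisj : Pairwise (Function.onFun Disjoint C)) :
    ∃ D : κ → Set V, (∀ i, IsCycleSet (B i) (D i) ∧ C i ⊆ D i) ∧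
      Pairwise (Function.onFun Disjoint D) := by
  let κ' := {i : κ // ¬∃ v, C i = {v}}
  choose m g hg hgC hgH using fun i : κ' => (hC i).exists_fin_injective_range_eq i.2
  have hgmem (i : κ') (j : Fin (m i + 2)) : g i j ∈ C i := hgC i ▸ Set.mem_range_self j
  have hginj : Function.Injective fun q : Σ i, Fin (m i + 2) => g q.1 q.2 :=
    injective_sigma_of_pairwise_disjoint (hdisj.comp_of_injective Subtype.val_injective) hg hgmem
  obtain ⟨x, hx, hxN⟩ := hG.exists_injective_commonNeighbors (fun i : κ' => hB i) hginj
    (fun i j => hCW i (hgmem i j)) fun i j => hd i _ _ (hgH i j)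
  have hxC (q) (k : κ) : x q ∉ C k := fun h => (hxN q).2 (hCW k h)
  let π : (Σ i : κ', Fin (m i + 2)) → κ := fun q => q.1
  refine ⟨fun i => C i ∪ x '' (π ⁻¹' {i}), fun i => ⟨?_, Set.subset_union_left⟩,
    pairwise_disjoint_union_image_fiber hdisj hx hxC π⟩
  by_cases hi : ∃ v, C i = {v}
  · have himage : x '' (π ⁻¹' {i}) = ∅ :=
      Set.image_eq_empty.2 <| Set.eq_empty_of_forall_notMem fun q hq =>
        q.1.2 (by rwa [show (q.1 : κ) = i from hq])
    exact .inl (by simpa only [himage, Set.union_empty] using hi)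
  · have himage : x '' (π ⁻¹' {i}) = Set.range fun j => x ⟨⟨i, hi⟩, j⟩ := by
      ext y
      constructor
      · rintro ⟨⟨⟨_, _⟩, j⟩, rfl, rfl⟩
        exact ⟨j, rfl⟩
      · rintro ⟨j, rfl⟩
        exact ⟨_, rfl, rfl⟩
    suffices IsCycleSet (B i) (Set.range (g ⟨i, hi⟩) ∪ x '' (π ⁻¹' {i})) by rwa [hgC] at this
    rw [himage]
    refine .of_range_union_range ((hg _).sumElim (hx.comp sigma_mk_injective) fun j l h => ?_)
      (fun j => (hxN ⟨⟨i, hi⟩, j⟩).1.1) fun j => (hxN ⟨⟨i, hi⟩, j⟩).1.2.symm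
    exact hxC ⟨_, l⟩ i (h ▸ hgmem ⟨i, hi⟩ j)

end IsLinkSparse

end LinkSparse

section ColorClass

variable {V ι : Type*} {G : SimpleGraph V} {c : Sym2 V → ι} {i : ι}

/-- The graph formed by the edges of `G` of color `i`, through which statements on monochromatic
cycles reduce to statements on cycles. -/
def colorClass (G : SimpleGraph V) (c : Sym2 V → ι) (i : ι) : SimpleGraph V where
  Adj u v := G.Adj u v ∧ c s(u, v) = i
  symm := ⟨fun _ _ h => ⟨h.1.symm, Sym2.eq_swap ▸ h.2⟩⟩
  loopless := ⟨fun _ h => h.1.ne rfl⟩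

theorem colorClass_le : colorClass G c i ≤ G := fun _ _ h => h.1

theorem IsCycleSet.isMonoCycle {S : Set V} (h : IsCycleSet (colorClass G c i) S) :
    IsMonoCycle G c i S := by
  rcases h with hv | ⟨u, v, huv, rfl⟩ | ⟨v, w, hw, rfl⟩
  · exact .inl hv
  · exact .inr (.inl ⟨u, v, huv.1, huv.2, rfl⟩)
  · refine .inr (.inr ⟨v, w.mapLe colorClass_le, hw.mapLe colorClass_le, ?_, by simp⟩)
    intro e he
    rw [SimpleGraph.Walk.edges_mapLe_eq_edges] at he
    induction e with
    | _ x y => exact (w.adj_of_mem_edges he).2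

end ColorClass

section AuxGraph

variable {n r : ℕ} {G : SimpleGraph (Fin n)} {c : Sym2 (Fin n) → Fin r} {W : Finset (Fin n)}
  {f : Fin n → Fin r} {d : ℝ}

theorem coloredNbhd_inter_coloredNbhd_compl (i : Fin r) (u v : Fin n) :
    coloredNbhd G c i u (W : Set (Fin n))ᶜ ∩ coloredNbhd G c i v (W : Set (Fin n))ᶜ =
      (colorClass G c i).commonNeighbors u v \ W := by
  ext y
  simp only [coloredNbhd, colorClass, SimpleGraph.mem_commonNeighbors, Set.mem_inter_iff,
    Set.mem_ofPred_eq, Set.mem_compl_iff, Set.mem_sdiff]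
  tauto

theorem auxGraph_adj_le_ncard_commonNeighbors {i : Fin r} {u v : Fin n}
    (h : (auxGraph G c W f i d).Adj u v) :
    d ≤ (((colorClass G c i).commonNeighbors u v \ W).ncard : ℝ) := by
  rw [auxGraph, SimpleGraph.fromRel_adj] at h
  simp only [coloredNbhd_inter_coloredNbhd_compl] at h
  rcases h.2 with h | h
  · exact h.2.2.2.2
  · rw [SimpleGraph.commonNeighbors_symm]
    exact h.2.2.2.2

theorem IsLinkSparse.exists_pairwise_disjoint_isMonoCycle (hG : IsLinkSparse G W.card d)
    {κ : Type*} {color : κ → Fin r} {C : κ → Set (Fin n)}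
    (hC : ∀ q, IsCycleSet (auxGraph G c W f (color q) d) (C q)) (hCW : ∀ q, C q ⊆ W)
    (hdisj : Pairwise (Function.onFun Disjoint C)) :
    ∃ D : κ → Set (Fin n), (∀ q, IsMonoCycle G c (color q) (D q) ∧ C q ⊆ D q) ∧
      Pairwise (Function.onFun Disjoint D) := by
  obtain ⟨D, hD, hDdisj⟩ := hG.exists_pairwise_disjoint_isCycleSet
    (B := fun q => colorClass G c (color q)) (fun _ => colorClass_le)
    (fun _ _ _ => auxGraph_adj_le_ncard_commonNeighbors) hC hCW hdisj
  exact ⟨D, fun q => ⟨(hD q).1.isMonoCycle, (hD q).2⟩, hDdisj⟩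

end AuxGraph

section Bernoulli

variable {α β : Type*} [Fintype α] {q : ℝ}

theorem isProbabilityMeasure_bernoulliM_s12 (h0 : 0 ≤ q) (h1 : q ≤ 1) :
    IsProbabilityMeasure (bernoulliM q) :=
  ⟨by simp [bernoulliM, ← ENNReal.ofReal_add h0 (sub_nonneg.2 h1)]⟩

theorem pi_bernoulliM_forall_mem_eq_true (h0 : 0 ≤ q) (h1 : q ≤ 1) (E : Finset α) :
    Measure.pi (fun _ : α => bernoulliM q) {ω | ∀ e ∈ E, ω e = true} =
      ENNReal.ofReal q ^ E.card := by
  classical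
  have := isProbabilityMeasure_bernoulliM_s12 h0 h1
  have hpi : {ω : α → Bool | ∀ e ∈ E, ω e = true} =
      Set.univ.pi fun e => if e ∈ E then {true} else Set.univ :=
    (Set.univ_pi_ite (E : Set α) fun _ => {true}).symm
  have hcoord (e : α) : bernoulliM q (if e ∈ E then {true} else Set.univ) =
      if e ∈ E then ENNReal.ofReal q else 1 := by
    split_ifs
    · simp [bernoulliM]
    · exact measure_univ
  rw [hpi, Measure.pi_pi, Finset.prod_congr rfl fun e _ => hcoord e, Finset.prod_ite_mem,
    Finset.univ_inter, Finset.prod_const]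

theorem pi_bernoulliM_le_card_filter_le (h0 : 0 ≤ q) (h1 : q ≤ 1) {Q : Finset β}
    {E : β → Finset α} {k : ℕ} (hk : ∀ z ∈ Q, (E z).card = k)
    (hE : (Q : Set β).PairwiseDisjoint E) (t : ℕ) :
    Measure.pi (fun _ : α => bernoulliM q)
        {ω | t ≤ ({z ∈ Q | ∀ e ∈ E z, ω e = true} : Finset β).card} ≤
      Q.card.choose t * ENNReal.ofReal q ^ (k * t) := by
  set μ := Measure.pi fun _ : α => bernoulliM q
  have hsubset : {ω : α → Bool | t ≤ ({z ∈ Q | ∀ e ∈ E z, ω e = true} : Finset β).card} ⊆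
      ⋃ T ∈ Q.powersetCard t, {ω | ∀ z ∈ T, ∀ e ∈ E z, ω e = true} := by
    intro ω hω
    obtain ⟨T, hT, hTcard⟩ := Finset.exists_subset_card_eq hω
    exact Set.mem_biUnion
      (Finset.mem_powersetCard.2 ⟨hT.trans (Finset.filter_subset _ _), hTcard⟩)
      fun z hz => (Finset.mem_filter.1 (hT hz)).2
  have hμ : ∀ T ∈ Q.powersetCard t,
      μ {ω | ∀ z ∈ T, ∀ e ∈ E z, ω e = true} = ENNReal.ofReal q ^ (k * t) := by
    intro T hT
    obtain ⟨hTQ, hTcard⟩ := Finset.mem_powersetCard.1 hT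
    have hcard : (T.disjiUnion E (hE.subset hTQ)).card = k * t := by
      rw [Finset.card_disjiUnion, Finset.sum_congr rfl fun z hz => hk z (hTQ hz),
        Finset.sum_const, hTcard, smul_eq_mul, mul_comm]
    rw [← hcard, ← pi_bernoulliM_forall_mem_eq_true h0 h1]
    simp only [Finset.mem_disjiUnion, forall_exists_index, and_imp]
    exact congrArg μ (Set.ext fun ω => ⟨fun h e z hz => h z hz e, fun h z hz e => h e z hz⟩)
  calc _ ≤ ∑ T ∈ Q.powersetCard t, μ {ω | ∀ z ∈ T, ∀ e ∈ E z, ω e = true} :=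
        (measure_mono hsubset).trans (measure_biUnion_finset_le _ _)
    _ = Q.card.choose t * ENNReal.ofReal q ^ (k * t) := by
        rw [Finset.sum_congr rfl hμ, Finset.sum_const, Finset.card_powersetCard, nsmul_eq_mul]

theorem choose_mul_pow_le_exp_neg {N t : ℕ} {x : ℝ} (hx : 0 ≤ x)
    (h : Real.exp 2 * (N * x) ≤ t) : N.choose t * x ^ t ≤ Real.exp (-t) := by
  have hNx : N * x ≤ t * Real.exp (-2) := by
    rwa [Real.exp_neg, ← div_eq_mul_inv, le_div_iff₀' (Real.exp_pos 2)]
  calc (N.choose t : ℝ) * x ^ t ≤ N ^ t / t.factorial * x ^ t := by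
        gcongr
        exact Nat.choose_le_pow_div t N
    _ = (N * x) ^ t / t.factorial := by ring
    _ ≤ (t * Real.exp (-2)) ^ t / t.factorial := by gcongr
    _ = t ^ t / t.factorial * Real.exp (-2) ^ t := by ring
    _ ≤ Real.exp t * Real.exp (-2) ^ t := by
        gcongr
        exact Real.pow_div_factorial_le_exp _ t.cast_nonneg t
    _ = Real.exp (-t) := by
        rw [← Real.exp_nat_mul, ← Real.exp_add]
        ring_nf

theorem pi_bernoulliM_le_card_filter_le_exp_neg (h0 : 0 ≤ q) (h1 : q ≤ 1) {Q : Finset β}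
    {E : β → Finset α} {k : ℕ} (hk : ∀ z ∈ Q, (E z).card = k)
    (hE : (Q : Set β).PairwiseDisjoint E) {τ : ℝ} (hτ : Real.exp 2 * (Q.card * q ^ k) ≤ τ) :
    Measure.pi (fun _ : α => bernoulliM q)
        {ω | τ ≤ ({z ∈ Q | ∀ e ∈ E z, ω e = true} : Finset β).card} ≤
      ENNReal.ofReal (Real.exp (-τ)) := by
  have hceil : τ ≤ ⌈τ⌉₊ := Nat.le_ceil τ
  calc _ ≤ (Q.card.choose ⌈τ⌉₊ : ENNReal) * ENNReal.ofReal q ^ (k * ⌈τ⌉₊) := by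
        simpa only [Nat.ceil_le] using pi_bernoulliM_le_card_filter_le h0 h1 hk hE ⌈τ⌉₊
    _ = ENNReal.ofReal (Q.card.choose ⌈τ⌉₊ * (q ^ k) ^ ⌈τ⌉₊) := by
        rw [ENNReal.ofReal_mul (Nat.cast_nonneg _), ENNReal.ofReal_natCast, ← pow_mul,
          ENNReal.ofReal_pow h0]
    _ ≤ ENNReal.ofReal (Real.exp (-τ)) := by
        refine ENNReal.ofReal_le_ofReal <|
          (choose_mul_pow_le_exp_neg (by positivity) (hτ.trans hceil)).trans ?_
        gcongr

end Bernoulli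

section RandomGraph

variable {n : ℕ} {q : ℝ}

theorem isProbabilityMeasure_gnp_s12 (h0 : 0 ≤ q) (h1 : q ≤ 1) : IsProbabilityMeasure (gnp n q) := by
  have := isProbabilityMeasure_bernoulliM_s12 h0 h1
  unfold gnp
  infer_instance

theorem eq_true_of_mem_edgeSet_graphOf {ω : Sym2 (Fin n) → Bool} {e : Sym2 (Fin n)}
    (he : e ∈ (graphOf ω).edgeSet) : ω e = true := by
  induction e with
  | _ u v =>
    rw [SimpleGraph.mem_edgeSet, graphOf, SimpleGraph.fromRel_adj, Sym2.eq_swap (a := v),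
      or_self] at he
    exact he.2

section LinkEdges

variable {ι V : Type*} {a b : ι → V} {X : Finset V}

open Classical in
/-- The edges that make `z.2` a common neighbor of the pair `(a z.1, b z.1)`. -/
noncomputable def linkEdges (a b : ι → V) (z : ι × V) : Finset (Sym2 V) :=
  {s(a z.1, z.2), s(b z.1, z.2)}

theorem mem_pairIncidences_iff_linkEdges [Fintype ι] {G : SimpleGraph V} {X : Finset V}
    {z : ι × V} :
    z ∈ pairIncidences G a b X ↔ z.2 ∈ X ∧ ∀ e ∈ linkEdges a b z, e ∈ G.edgeSet := by
  simp [pairIncidences, linkEdges, Finset.mem_product]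

theorem eq_and_eq_of_sym2_mk_eq {c : ι → V} (hc : Function.Injective c) (hcX : ∀ j, c j ∉ X)
    {j k : ι} {y z : V} (hz : z ∈ X) (h : s(c j, y) = s(c k, z)) : j = k ∧ y = z := by
  obtain ⟨hjk, hyz⟩ | ⟨hjz, -⟩ := Sym2.eq_iff.1 h
  · exact ⟨hc hjk, hyz⟩
  · exact absurd (hjz ▸ hz) (hcX j)

theorem card_linkEdges (hab : Function.Injective (Sum.elim a b)) (z : ι × V) :
    (linkEdges a b z).card = 2 :=
  open Classical in Finset.card_pair fun h =>
    (Sum.elim_injective.1 hab).2.2 z.1 z.1 (Sym2.congr_left.1 h)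

theorem disjoint_linkEdges (hab : Function.Injective (Sum.elim a b))
    (habX : ∀ z, Sum.elim a b z ∉ X) {z z' : ι × V} (hz' : z'.2 ∈ X) (hne : z ≠ z') :
    Disjoint (linkEdges a b z) (linkEdges a b z') := by
  have hinj (ζ ζ' : ι ⊕ ι) (h : s(Sum.elim a b ζ, z.2) = s(Sum.elim a b ζ', z'.2)) :
      ζ = ζ' ∧ z.2 = z'.2 := eq_and_eq_of_sym2_mk_eq hab habX hz' h
  rw [Finset.disjoint_left]
  intro e he he'
  simp only [linkEdges, Finset.mem_insert, Finset.mem_singleton] at he he'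
  obtain rfl | rfl := he <;> obtain h | h := he'
  · have hζ := hinj (.inl _) (.inl _) h
    exact hne (Prod.ext (Sum.inl_injective hζ.1) hζ.2)
  · exact Sum.inl_ne_inr (hinj (.inl _) (.inr _) h).1
  · exact Sum.inr_ne_inl (hinj (.inr _) (.inl _) h).1
  · have hζ := hinj (.inr _) (.inr _) h
    exact hne (Prod.ext (Sum.inr_injective hζ.1) hζ.2)

end LinkEdges

theorem gnp_isDenseLinkage_le (h0 : 0 ≤ q) (h1 : q ≤ 1) {w : ℕ} {d : ℝ}
    (hd : Real.exp 2 * (w * q ^ 2) ≤ d) {ι : Type*} [Fintype ι] (a b : ι → Fin n)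
    (X : Finset (Fin n)) :
    gnp n q {ω | IsDenseLinkage (graphOf ω) w d a b X} ≤
      ENNReal.ofReal (Real.exp (-(Fintype.card ι * d))) := by
  by_cases hX : Function.Injective (Sum.elim a b) ∧ (∀ z, Sum.elim a b z ∉ X) ∧ X.card ≤ w
  swap
  · have hempty : {ω | IsDenseLinkage (graphOf ω) w d a b X} = (∅ : Set (Sym2 (Fin n) → Bool)) :=
      Set.eq_empty_of_forall_notMem fun ω hω => hX ⟨hω.1, hω.2.1, hω.2.2.1⟩
    simp [hempty]
  obtain ⟨hab, habX, hXw⟩ := hX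
  have hcard : Real.exp 2 * (((Finset.univ : Finset ι) ×ˢ X).card * q ^ 2) ≤
      Fintype.card ι * d := by
    calc _ = Fintype.card ι * (Real.exp 2 * (X.card * q ^ 2)) := by
          rw [Finset.card_product, Finset.card_univ, Nat.cast_mul]
          ring
      _ ≤ Fintype.card ι * (Real.exp 2 * (w * q ^ 2)) := by gcongr
      _ ≤ Fintype.card ι * d := by gcongr
  refine (measure_mono fun ω hω => hω.2.2.2.trans <| Nat.cast_le.2 <| Finset.card_le_card ?_).trans
    (pi_bernoulliM_le_card_filter_le_exp_neg h0 h1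
      (fun z _ => card_linkEdges hab z)
      (fun z _ z' hz' => disjoint_linkEdges hab habX (Finset.mem_product.1 hz').2) hcard)
  intro z hz
  obtain ⟨hzX, hz⟩ := mem_pairIncidences_iff_linkEdges.1 hz
  simp only [Finset.mem_filter, Finset.mem_product]
  exact ⟨⟨Finset.mem_univ _, hzX⟩, fun e he => eq_true_of_mem_edgeSet_graphOf (hz e he)⟩

theorem exists_fin_image_eq {V : Type*} [DecidableEq V] {X : Finset V} (hX : X.Nonempty) {k : ℕ}
    (hk : X.card ≤ k) : ∃ x : Fin k → V, Finset.univ.image x = X := by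
  have : Nonempty X := hX.to_subtype
  obtain ⟨φ⟩ : Nonempty (X ↪ Fin k) := Function.Embedding.nonempty_of_card_le (by simpa using hk)
  let ψ : Fin k → X := Function.invFun φ
  have hψ : Function.Surjective ψ := Function.invFun_surjective φ.injective
  refine ⟨fun j => ψ j, Finset.ext fun y => ?_⟩
  simp only [Finset.mem_image, Finset.mem_univ, true_and]
  refine ⟨fun ⟨j, hj⟩ => hj ▸ (ψ j).2, fun hy => ?_⟩
  obtain ⟨j, hj⟩ := hψ ⟨y, hy⟩
  exact ⟨j, congrArg Subtype.val hj⟩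

theorem IsDenseLinkage.nonempty {V ι : Type*} [Fintype ι] [Nonempty ι] {G : SimpleGraph V} {w : ℕ}
    {d : ℝ} {a b : ι → V} {X : Finset V} (h : IsDenseLinkage G w d a b X) (hd : 0 < d) :
    X.Nonempty := by
  have hpos : 0 < Fintype.card ι * d := by positivity
  obtain ⟨z, hz⟩ := Finset.card_pos.1 (Nat.cast_pos.1 (hpos.trans_le h.2.2.2))
  exact ⟨z.2, (mem_pairIncidences_iff_linkEdges.1 hz).1⟩

theorem IsDenseLinkage.card_le {V : Type*} [Fintype V] {s : ℕ} {G : SimpleGraph V} {w : ℕ}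
    {d : ℝ} {a b : Fin s → V} {X : Finset V} (h : IsDenseLinkage G w d a b X) :
    s ≤ Fintype.card V := by
  simpa using Fintype.card_le_of_injective _ (Sum.elim_injective.1 h.1).1

theorem gnp_exists_isDenseLinkage_le (h0 : 0 ≤ q) (h1 : q ≤ 1) {w : ℕ} {d : ℝ} (hd0 : 0 < d)
    (hd : Real.exp 2 * (w * q ^ 2) ≤ d) {s : ℕ} (hs : 0 < s) :
    gnp n q {ω | ∃ (a b : Fin s → Fin n) (X : Finset (Fin n)), X.card ≤ 3 * s ∧
        IsDenseLinkage (graphOf ω) w d a b X} ≤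
      ENNReal.ofReal (n ^ (5 * s) * Real.exp (-(s * d))) := by
  have := Fin.pos_iff_nonempty.1 hs
  let T := (Fin s → Fin n) × (Fin s → Fin n) × (Fin (3 * s) → Fin n)
  let A : T → Set (Sym2 (Fin n) → Bool) := fun z =>
    {ω | IsDenseLinkage (graphOf ω) w d z.1 z.2.1 (Finset.univ.image z.2.2)}
  have hsubset : {ω | ∃ (a b : Fin s → Fin n) (X : Finset (Fin n)), X.card ≤ 3 * s ∧
      IsDenseLinkage (graphOf ω) w d a b X} ⊆ ⋃ z ∈ Finset.univ, A z := by
    rintro ω ⟨a, b, X, hX, h⟩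
    obtain ⟨x, rfl⟩ := exists_fin_image_eq (h.nonempty hd0) hX
    exact Set.mem_biUnion (Finset.mem_univ (a, b, x)) h
  have hT : Fintype.card T = n ^ (5 * s) := by
    simp only [T, Fintype.card_prod, Fintype.card_fun, Fintype.card_fin]
    ring
  calc _ ≤ ∑ z, gnp n q (A z) := (measure_mono hsubset).trans (measure_biUnion_finset_le _ _)
    _ ≤ ∑ _z : T, ENNReal.ofReal (Real.exp (-(s * d))) := Finset.sum_le_sum fun z _ => by
        simpa only [Fintype.card_fin] using gnp_isDenseLinkage_le h0 h1 hd z.1 z.2.1 _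
    _ = ENNReal.ofReal (n ^ (5 * s) * Real.exp (-(s * d))) := by
        rw [Finset.sum_const, Finset.card_univ, hT, nsmul_eq_mul,
          ENNReal.ofReal_mul (by positivity), ← Nat.cast_pow, ENNReal.ofReal_natCast]

theorem pow_mul_exp_neg_le_inv_sq {d : ℝ} (hn : 0 < n) (hd : 7 * Real.log n ≤ d) {s : ℕ}
    (hs : 0 < s) : (n : ℝ) ^ (5 * s) * Real.exp (-(s * d)) ≤ ((n : ℝ) ^ 2)⁻¹ := by
  have hn' : (0 : ℝ) < n := Nat.cast_pos.2 hn
  have hn1 : (1 : ℝ) ≤ n := Nat.one_le_cast.2 hn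
  have hexp : ((n : ℝ) ^ (7 * s)) ≤ Real.exp (s * d) := by
    rw [← Real.exp_log (pow_pos hn' _), Real.log_pow, Real.exp_le_exp]
    calc ((7 * s : ℕ) : ℝ) * Real.log n = s * (7 * Real.log n) := by
          push_cast
          ring
      _ ≤ s * d := by gcongr
  calc (n : ℝ) ^ (5 * s) * Real.exp (-(s * d)) ≤ n ^ (5 * s) * ((n : ℝ) ^ (7 * s))⁻¹ := by
        rw [Real.exp_neg]
        gcongr
    _ = ((n : ℝ) ^ (2 * s))⁻¹ := by
        field_simp
        ring
    _ ≤ ((n : ℝ) ^ 2)⁻¹ := by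
        gcongr
        omega

theorem gnp_not_isLinkSparse_le (hn : 2 ≤ n) (h0 : 0 ≤ q) (h1 : q ≤ 1) {w : ℕ} {d : ℝ}
    (hd : Real.exp 2 * (w * q ^ 2) ≤ d) (hlog : 7 * Real.log n ≤ d) :
    gnp n q {ω | ¬IsLinkSparse (graphOf ω) w d} ≤ (n : ENNReal)⁻¹ := by
  have hlogn : 0 < Real.log n := Real.log_pos (Nat.one_lt_cast.2 hn)
  have hd0 : 0 < d := by linarith
  let A : ℕ → Set (Sym2 (Fin n) → Bool) := fun s =>
    {ω | ∃ (a b : Fin s → Fin n) (X : Finset (Fin n)), X.card ≤ 3 * s ∧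
      IsDenseLinkage (graphOf ω) w d a b X}
  have hsubset : {ω | ¬IsLinkSparse (graphOf ω) w d} ⊆ ⋃ s ∈ Finset.Icc 1 n, A s := by
    intro ω hω
    simp only [IsLinkSparse, Set.mem_ofPred_eq] at hω
    push Not at hω
    obtain ⟨s, hs, a, b, X, hX, h⟩ := hω
    exact Set.mem_biUnion (Finset.mem_Icc.2 ⟨hs, by simpa using h.card_le⟩) ⟨a, b, X, hX, h⟩
  calc _ ≤ ∑ s ∈ Finset.Icc 1 n, gnp n q (A s) :=
        (measure_mono hsubset).trans (measure_biUnion_finset_le _ _)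
    _ ≤ ∑ s ∈ Finset.Icc 1 n, ENNReal.ofReal ((n : ℝ) ^ 2)⁻¹ := Finset.sum_le_sum fun s hs => by
        have hs : 0 < s := (Finset.mem_Icc.1 hs).1
        exact (gnp_exists_isDenseLinkage_le h0 h1 hd0 hd hs).trans
          (ENNReal.ofReal_le_ofReal (pow_mul_exp_neg_le_inv_sq (by omega) hlog hs))
    _ = ENNReal.ofReal (n * ((n : ℝ) ^ 2)⁻¹) := by
        rw [Finset.sum_const, Nat.card_Icc, Nat.add_sub_cancel, nsmul_eq_mul,
          ENNReal.ofReal_mul (by positivity), ENNReal.ofReal_natCast]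
    _ = (n : ENNReal)⁻¹ := by
        have : (n : ℝ) * ((n : ℝ) ^ 2)⁻¹ = (n : ℝ)⁻¹ := by field_simp
        rw [this, ENNReal.ofReal_inv_of_pos (by positivity), ENNReal.ofReal_natCast]

end RandomGraph

theorem tendsto_gnp_isLinkSparse {p d : ℕ → ℝ} {w : ℕ → ℕ} (hp0 : ∀ n, 0 ≤ p n)
    (hp1 : ∀ n, p n ≤ 1) (hd : ∀ᶠ n in atTop, Real.exp 2 * (w n * p n ^ 2) ≤ d n)
    (hlog : ∀ᶠ n : ℕ in atTop, 7 * Real.log n ≤ d n) :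
    Tendsto (fun n => gnp n (p n) {ω | IsLinkSparse (graphOf ω) (w n) (d n)}) atTop (nhds 1) := by
  have hinv : Tendsto (fun n : ℕ => 1 - (n : ENNReal)⁻¹) atTop (nhds 1) := by
    simpa using ENNReal.Tendsto.sub tendsto_const_nhds ENNReal.tendsto_inv_nat_nhds_zero
      (.inl ENNReal.one_ne_top)
  refine tendsto_of_tendsto_of_tendsto_of_le_of_le' hinv tendsto_const_nhds ?_
    (.of_forall fun n => ?_)
  · filter_upwards [eventually_ge_atTop 2, hd, hlog] with n hn hdn hlogn
    have := isProbabilityMeasure_gnp_s12 (n := n) (hp0 n) (hp1 n)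
    rw [tsub_le_iff_right, ← measure_univ (μ := gnp n (p n))]
    exact (measure_univ_le_add_compl _).trans
      (add_le_add_right (gnp_not_isLinkSparse_le hn (hp0 n) (hp1 n) hdn hlogn) _)
  · have := isProbabilityMeasure_gnp_s12 (n := n) (hp0 n) (hp1 n)
    exact prob_le_one

theorem tendsto_gnp_one_of_subset {p : ℕ → ℝ} (hp0 : ∀ n, 0 ≤ p n) (hp1 : ∀ n, p n ≤ 1)
    {A B : (n : ℕ) → Set (Sym2 (Fin n) → Bool)}
    (hA : Tendsto (fun n => gnp n (p n) (A n)) atTop (nhds 1)) (hAB : ∀ n, A n ⊆ B n) :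
    Tendsto (fun n => gnp n (p n) (B n)) atTop (nhds 1) :=
  tendsto_of_tendsto_of_tendsto_of_le_of_le hA tendsto_const_nhds (fun n => measure_mono (hAB n))
    fun n => by
      have := isProbabilityMeasure_gnp_s12 (n := n) (hp0 n) (hp1 n)
      exact prob_le_one

theorem eventually_const_mul_log_le_mul_sq {p : ℕ → ℝ}
    (hp : Tendsto (fun n : ℕ => p n / Real.sqrt (Real.log n / n)) atTop atTop)
    {K : ℝ} (hK : 0 ≤ K) : ∀ᶠ n : ℕ in atTop, K * Real.log n ≤ n * p n ^ 2 := by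
  filter_upwards [hp.eventually_ge_atTop √K, eventually_ge_atTop 2] with n hn hn2
  have hlog : 0 < Real.log n := Real.log_pos (Nat.one_lt_cast.2 hn2)
  rw [le_div_iff₀ (by positivity), ← Real.sqrt_mul hK] at hn
  calc K * Real.log n = n * (K * (Real.log n / n)) := by field_simp
    _ ≤ n * p n ^ 2 := by
        gcongr
        exact (Real.sqrt_le_iff.1 hn).2

theorem stmt12_general (r : ℕ) (hr : 0 < r)
    (W : (n : ℕ) → Finset (Fin n))
    (hW : ∀ n : ℕ, ((W n).card : ℝ) ≤ (n : ℝ) / (100 * r : ℝ) ^ 4)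
    (p : ℕ → ℝ) (hp0 : ∀ n, 0 ≤ p n) (hp1 : ∀ n, p n ≤ 1)
    (hpgg : Tendsto (fun n : ℕ => p n / Real.sqrt (Real.log n / n)) atTop atTop) :
    Tendsto (fun n => gnp n (p n)
      {ω | ∀ (col : Sym2 (Fin n) → Fin r) (f : Fin n → Fin r) (k : Fin r → ℕ)
        (Cyc : (i : Fin r) → Fin (k i) → Set (Fin n)),
          (∀ i j,
            IsCycleSet (auxGraph (graphOf ω) col (W n) f i
              ((n : ℝ) * p n ^ 2 / (50 * r : ℝ) ^ 4)) (Cyc i j) ∧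
            Cyc i j ⊆ W n) →
          (∀ a b : Σ i : Fin r, Fin (k i), a ≠ b → Disjoint (Cyc a.1 a.2) (Cyc b.1 b.2)) →
          ∃ D : (i : Fin r) → Fin (k i) → Set (Fin n),
            (∀ i j, IsMonoCycle (graphOf ω) col i (D i j) ∧ Cyc i j ⊆ D i j) ∧
            (∀ a b : Σ i : Fin r, Fin (k i), a ≠ b → Disjoint (D a.1 a.2) (D b.1 b.2))})
      atTop (nhds 1) := by
  let d : ℕ → ℝ := fun n => n * p n ^ 2 / (50 * r : ℝ) ^ 4
  -- `16 = (100 r) ^ 4 / (50 r) ^ 4` exceeds `e ^ 2`, the ratio required for link sparsity.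
  have hexp : Real.exp 2 ≤ 16 := by
    have h := Real.exp_one_lt_d9
    rw [show (2 : ℝ) = 1 + 1 by norm_num, Real.exp_add]
    nlinarith [Real.exp_pos 1]
  have hd (n : ℕ) : Real.exp 2 * ((W n).card * p n ^ 2) ≤ d n := by
    calc Real.exp 2 * ((W n).card * p n ^ 2) ≤ 16 * (n / (100 * r : ℝ) ^ 4 * p n ^ 2) := by
          gcongr
          exact hW n
      _ = d n := by
          simp only [d]
          field_simp
          ring
  have hlog : ∀ᶠ n : ℕ in atTop, 7 * Real.log n ≤ d n := by
    filter_upwards [eventually_const_mul_log_le_mul_sq hpgg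
      (K := 7 * (50 * r : ℝ) ^ 4) (by positivity)] with n hn
    rw [le_div_iff₀ (by positivity)]
    linarith
  refine tendsto_gnp_one_of_subset hp0 hp1
    (tendsto_gnp_isLinkSparse hp0 hp1 (.of_forall hd) hlog) ?_
  intro n ω hω col f k Cyc hCyc hdisj
  obtain ⟨D, hD, hDdisj⟩ := IsLinkSparse.exists_pairwise_disjoint_isMonoCycle hω
    (color := fun q : Σ i, Fin (k i) => q.1) (C := fun q => Cyc q.1 q.2)
    (fun q => (hCyc q.1 q.2).1) (fun q => (hCyc q.1 q.2).2) hdisj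
  exact ⟨fun i j => D ⟨i, j⟩, fun i j => hD ⟨i, j⟩, hDdisj⟩

/-- Let `r ≥ 2`, `W = W(n) ⊆ [n]` fixed sets of at most `n/(100r)^4`
vertices, and `p = p(n) ≫ (log n/n)^{1/2}`. Then w.h.p.: for every `r`-coloring of the edges of
`G ~ G(n,p)`, every associated majority-color partition of `W`, and every choice of `kᵢ ≤ 3r-1`
vertex-disjoint cycles `C₁ⁱ, …` in each auxiliary graph `Hᵢ`, the graph `G` contains
`k₁ + ⋯ + k_r` vertex-disjoint monochromatic cycles such that for each `i`, `j`, one of these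
cycles has color `i` and contains all vertices of `V(Cⱼⁱ)`. -/
theorem stmt12 (r : ℕ) (hr : 2 ≤ r)
    (W : (n : ℕ) → Finset (Fin n))
    (hW : ∀ n : ℕ, ((W n).card : ℝ) ≤ (n : ℝ) / (100 * r : ℝ) ^ 4)
    (p : ℕ → ℝ) (hp0 : ∀ n, 0 ≤ p n) (hp1 : ∀ n, p n ≤ 1)
    (hpgg : Tendsto (fun n : ℕ => p n / Real.sqrt (Real.log n / n)) atTop atTop) :
    Tendsto (fun n => gnp n (p n)
      {ω | ∀ (col : Sym2 (Fin n) → Fin r) (f : Fin n → Fin r),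
        IsMajorityPartition (graphOf ω) col (W n) f →
        ∀ (k : Fin r → ℕ), (∀ i, k i ≤ 3 * r - 1) →
        ∀ Cyc : (i : Fin r) → Fin (k i) → Set (Fin n),
          (∀ i j,
            IsCycleSet (auxGraph (graphOf ω) col (W n) f i
              ((n : ℝ) * p n ^ 2 / (50 * r : ℝ) ^ 4)) (Cyc i j) ∧
            Cyc i j ⊆ {v | v ∈ W n ∧ f v = i}) →
          (∀ a b : Σ i : Fin r, Fin (k i), a ≠ b → Disjoint (Cyc a.1 a.2) (Cyc b.1 b.2)) →
          ∃ D : (i : Fin r) → Fin (k i) → Set (Fin n),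
            (∀ i j, IsMonoCycle (graphOf ω) col i (D i j) ∧ Cyc i j ⊆ D i j) ∧
            (∀ a b : Σ i : Fin r, Fin (k i), a ≠ b → Disjoint (D a.1 a.2) (D b.1 b.2))})
      atTop (nhds 1) := by
  exact tendsto_gnp_one_of_subset hp0 hp1 (stmt12_general r (by omega) W hW p hp0 hp1 hpgg)
    fun n ω h col f _ k _ Cyc hCyc => h col f k Cyc fun i j =>
      ⟨(hCyc i j).1, fun v hv => ((hCyc i j).2 hv).1⟩
end
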